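/- arXiv:1810.06829 — 3 statements merged into one kernel-verified Lean document; each statement's English description precedes it below -/
import Mathlib

section
/- For every n ≥ 1 and every x ∈ [0,1], the modified Durrmeyer operator satisfies D_n^{M,1}(e_1; x) = (a_1(n) + 2a_0(n)) x + (1 - 2x)(3a_0(n) + 2a_1(n))/(n+2), where e_1(t) = t. -/
open Filter Topology

/-- Bernstein basis polynomial `p_{n,k}(x)`, zero when `k < 0` or `k > n`. -/
noncomputable def bern (n : ℕ) (k : ℤ) (x : ℝ) : ℝ :=
  if 0 ≤ k ∧ k ≤ (n : ℤ) then (n.choose k.toNat : ℝ) * x ^ k.toNat * (1 - x) ^ (n - k.toNat)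
  else 0

/-- Modified Bernstein basis `p_{n,k}^{M,1}(x)` of Khosravian-Arab et al. -/
noncomputable def pM1 (a0 a1 : ℕ → ℝ) (n : ℕ) (k : ℤ) (x : ℝ) : ℝ :=
  (a1 n * x + a0 n) * bern (n - 1) k x + (a1 n * (1 - x) + a0 n) * bern (n - 1) (k - 1) x

/-- First-order modified Durrmeyer operator `D_n^{M,1}(f;x)`. -/
noncomputable def DM1 (a0 a1 : ℕ → ℝ) (n : ℕ) (f : ℝ → ℝ) (x : ℝ) : ℝ :=
  ((n : ℝ) + 1) * ∑ k ∈ Finset.range (n + 1),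
    pM1 a0 a1 n k x * ∫ t in (0:ℝ)..1, bern n k t * f t

lemma aux_beta (b : ℕ) : ∀ a : ℕ, (∫ t in (0:ℝ)..1, t ^ a * (1 - t) ^ b) * ((a + b + 1).factorial : ℝ)
    = (a.factorial : ℝ) * b.factorial := by
  induction b with
  | zero =>
    intro a
    simp only [pow_zero, mul_one, integral_pow, Nat.factorial_succ, add_zero]
    have : ((a : ℝ) + 1) ≠ 0 := by positivity
    push_cast
    field_simp
    simp
  | succ b ih =>
    intro a
    have h := ih (a + 1)
    have key : (∫ t in (0:ℝ)..1, (((a : ℝ) + 1) * (t ^ a * (1 - t) ^ (b + 1))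
        - ((b : ℝ) + 1) * (t ^ (a + 1) * (1 - t) ^ b))) = 0 := by
      have := intervalIntegral.integral_eq_sub_of_hasDerivAt (a := (0:ℝ)) (b := 1)
        (f := fun t : ℝ => t ^ (a + 1) * (1 - t) ^ (b + 1))
        (f' := fun t : ℝ => (((a : ℝ) + 1) * (t ^ a * (1 - t) ^ (b + 1))
        - ((b : ℝ) + 1) * (t ^ (a + 1) * (1 - t) ^ b))) ?_ ?_
      · rw [this]; simp
      · intro t _
        have h1 := (hasDerivAt_id t).pow (a + 1)
        have h2 := ((hasDerivAt_id t).const_sub 1).pow (b + 1)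
        refine (h1.mul h2).congr_deriv ?_
        simp
        ring
      · apply Continuous.intervalIntegrable
        fun_prop
    rw [intervalIntegral.integral_sub (by apply Continuous.intervalIntegrable; fun_prop)
      (by apply Continuous.intervalIntegrable; fun_prop),
      intervalIntegral.integral_const_mul, intervalIntegral.integral_const_mul] at key
    have e : a + 1 + b + 1 = a + (b + 1) + 1 := by ring
    rw [e, Nat.factorial_succ a] at h
    rw [Nat.factorial_succ b]
    push_cast at h ⊢
    have : ((a : ℝ) + 1) ≠ 0 := by positivity
    apply mul_left_cancel₀ this
    linear_combination ((a + (b + 1) + 1).factorial : ℝ) * key + ((b : ℝ) + 1) * h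

lemma bern_nat (n k : ℕ) (x : ℝ) :
    bern n (k : ℤ) x = (n.choose k : ℝ) * x ^ k * (1 - x) ^ (n - k) := by
  unfold bern
  split_ifs with h
  · simp
  · have : n < k := by omega
    simp [Nat.choose_eq_zero_of_lt this]

lemma bern_int (n k : ℕ) (hk : k ≤ n) :
    (∫ t in (0:ℝ)..1, bern n k t * t) = ((k : ℝ) + 1) / (((n : ℝ) + 1) * ((n : ℝ) + 2)) := by
  have h := aux_beta (n - k) (k + 1)
  have e : k + 1 + (n - k) + 1 = n + 2 := by omega
  rw [e] at h
  have c : (n.choose k : ℝ) * k.factorial * (n - k).factorial = n.factorial := by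
    exact_mod_cast Nat.choose_mul_factorial_mul_factorial hk
  have : (∫ t in (0:ℝ)..1, bern n k t * t)
      = (n.choose k : ℝ) * ∫ t in (0:ℝ)..1, t ^ (k + 1) * (1 - t) ^ (n - k) := by
    rw [← intervalIntegral.integral_const_mul]
    congr 1
    ext t
    rw [bern_nat]; ring
  rw [this, eq_div_iff (by positivity)]
  have hn : (n.factorial : ℝ) ≠ 0 := by positivity
  apply mul_left_cancel₀ hn
  simp only [Nat.factorial_succ] at h
  push_cast at h
  linear_combination (n.choose k : ℝ) * h + ((k : ℝ) + 1) * c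

lemma bern_sum0 (m : ℕ) (x : ℝ) : ∑ k ∈ Finset.range (m + 1), bern m (k : ℤ) x = 1 := by
  have h := congrArg (Polynomial.eval x) (bernsteinPolynomial.sum ℝ m)
  simpa [bernsteinPolynomial, Polynomial.eval_finsetSum, bern_nat] using h

lemma bern_sum1 (m : ℕ) (x : ℝ) :
    ∑ k ∈ Finset.range (m + 1), bern m (k : ℤ) x * k = m * x := by
  have h := congrArg (Polynomial.eval x) (bernsteinPolynomial.sum_smul ℝ m)
  simp [bernsteinPolynomial, Polynomial.eval_finsetSum] at h
  rw [← h]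
  apply Finset.sum_congr rfl
  intro k _
  rw [bern_nat]; ring

theorem DM1_moment_e1 (a0 a1 : ℕ → ℝ) (n : ℕ) (hn : 1 ≤ n)
    (x : ℝ) (hx : x ∈ Set.Icc (0:ℝ) 1) :
    DM1 a0 a1 n (fun t => t) x
      = (a1 n + 2 * a0 n) * x + (1 - 2 * x) * (3 * a0 n + 2 * a1 n) / ((n : ℝ) + 2) := by
  obtain ⟨m, rfl⟩ : ∃ m, n = m + 1 := ⟨n - 1, by omega⟩
  have s0 := bern_sum0 m x
  have s1 := bern_sum1 m x
  have A : ∑ k ∈ Finset.range (m + 1 + 1), bern m (k : ℤ) x * ((k : ℝ) + 1) = m * x + 1 := by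
    rw [Finset.sum_range_succ, bern_nat m (m + 1), Nat.choose_succ_self]
    simp only [mul_add, mul_one, Finset.sum_add_distrib, s0, s1]
    simp
  have B : ∑ k ∈ Finset.range (m + 1 + 1), bern m ((k : ℤ) - 1) x * ((k : ℝ) + 1)
      = m * x + 2 := by
    rw [Finset.sum_range_succ']
    have z : bern m (((0 : ℕ) : ℤ) - 1) x = 0 := by simp [bern]
    rw [z]
    have : ∀ k ∈ Finset.range (m + 1), bern m (((k + 1 : ℕ) : ℤ) - 1) x * (((k + 1 : ℕ) : ℝ) + 1)
        = bern m k x * k + bern m k x * 2 := by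
      intro k _
      push_cast
      rw [add_sub_cancel_right]; ring
    rw [Finset.sum_congr rfl this, Finset.sum_add_distrib, ← Finset.sum_mul, s0, s1]
    ring
  unfold DM1
  have : ∀ k ∈ Finset.range (m + 1 + 1),
      pM1 a0 a1 (m + 1) k x * (∫ t in (0:ℝ)..1, bern (m + 1) k t * t)
      = ((a1 (m + 1) * x + a0 (m + 1)) * (bern m k x * ((k : ℝ) + 1))
        + (a1 (m + 1) * (1 - x) + a0 (m + 1)) * (bern m ((k : ℤ) - 1) x * ((k : ℝ) + 1)))
        * (1 / ((((m + 1 : ℕ) : ℝ) + 1) * (((m + 1 : ℕ) : ℝ) + 2))) := by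
    intro k hk
    rw [bern_int (m + 1) k (by simp at hk; omega)]
    simp only [pM1, Nat.add_sub_cancel]
    ring
  rw [Finset.sum_congr rfl this, ← Finset.sum_mul, Finset.sum_add_distrib, ← Finset.mul_sum,
    ← Finset.mul_sum, A, B]
  have h1 : (((m + 1 : ℕ) : ℝ) + 1) ≠ 0 := by positivity
  have h2 : (((m + 1 : ℕ) : ℝ) + 2) ≠ 0 := by positivity
  field_simp
  push_cast
  ring
end

section
/- Let a_0(n), a_1(n) be convergent sequences satisfying 2a_0(n) + a_1(n) = 1, a_0(n) ≥ 0, and a_0(n) + a_1(n) ≥ 0 for all n, with limits l_0 = lim a_0(n) and l_1 = lim a_1(n). If f is twice continuously differentiable on [0,1], then n(D_n^{M,1}(f; x) − f(x)) converges, uniformly on [0,1], to (1 − 2x)(2l_1 + 3l_0) f′(x) + x(1 − x)(2l_0 + l_1) f″(x) as n → ∞. -/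
open Filter Topology

lemma bern_neg_one (n : ℕ) (x : ℝ) : bern n (-1) x = 0 := by
  unfold bern
  simp

lemma bern_cont (n k : ℕ) : Continuous (fun x => bern n (k : ℤ) x) := by
  simp_rw [bern_nat]
  fun_prop

lemma bern_nonneg (n k : ℕ) (x : ℝ) (hx : x ∈ Set.Icc (0:ℝ) 1) : 0 ≤ bern n (k : ℤ) x := by
  rw [bern_nat]
  have := hx.1
  have : 0 ≤ 1 - x := by linarith [hx.2]
  positivity

/-- Bernstein expectation. -/
noncomputable def bM (m : ℕ) (x : ℝ) (g : ℕ → ℝ) : ℝ :=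
  ∑ k ∈ Finset.range (m + 1), bern m (k : ℤ) x * g k

lemma bM_succ (m : ℕ) (x : ℝ) (g : ℕ → ℝ) :
    bM (m + 1) x g = (1 - x) * bM m x g + x * bM m x (fun k => g (k + 1)) := by
  unfold bM
  simp_rw [bern_nat]
  rw [Finset.sum_range_succ']
  have h1 : ∀ k ∈ Finset.range (m + 1), ((m + 1).choose (k + 1) : ℝ) * x ^ (k + 1) *
      (1 - x) ^ (m + 1 - (k + 1)) * g (k + 1)
      = x * ((m.choose k : ℝ) * x ^ k * (1 - x) ^ (m - k) * g (k + 1)) +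
        (m.choose (k + 1) : ℝ) * x ^ (k + 1) * (1 - x) ^ (m - k) * g (k + 1) := by
    intro k hk
    rw [Nat.choose_succ_succ, Nat.add_sub_add_right]
    push_cast
    ring
  rw [Finset.sum_congr rfl h1, Finset.sum_add_distrib, ← Finset.mul_sum]
  rw [Finset.sum_range_succ (fun k => (m.choose (k + 1) : ℝ) * x ^ (k + 1) * (1 - x) ^ (m - k) * g (k + 1)) m]
  rw [Finset.sum_range_succ' (fun k => (m.choose k : ℝ) * x ^ k * (1 - x) ^ (m - k) * g k) m]
  have h2 : ∀ k ∈ Finset.range m, (m.choose (k + 1) : ℝ) * x ^ (k + 1) * (1 - x) ^ (m - k) * g (k + 1)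
      = (1 - x) * ((m.choose (k + 1) : ℝ) * x ^ (k + 1) * (1 - x) ^ (m - (k + 1)) * g (k + 1)) := by
    intro k hk
    have hk' := Finset.mem_range.mp hk
    have : m - k = (m - (k + 1)) + 1 := by omega
    rw [this, pow_succ]
    ring
  rw [Finset.sum_congr rfl h2, ← Finset.mul_sum]
  simp [pow_succ]
  ring

lemma bM_poly (m : ℕ) (x : ℝ) : ∀ c0 c1 c2 c3 c4 : ℝ,
    bM m x (fun k => c0 + c1 * k + c2 * (k:ℝ) ^ 2 + c3 * (k:ℝ) ^ 3 + c4 * (k:ℝ) ^ 4)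
    = c0 + c1 * (m * x) + c2 * (m * x + m * (m - 1) * x ^ 2)
      + c3 * (m * x + 3 * (m * (m - 1)) * x ^ 2 + m * (m - 1) * (m - 2) * x ^ 3)
      + c4 * (m * x + 7 * (m * (m - 1)) * x ^ 2 + 6 * (m * (m - 1) * (m - 2)) * x ^ 3
        + m * (m - 1) * (m - 2) * (m - 3) * x ^ 4) := by
  induction m with
  | zero => intro c0 c1 c2 c3 c4; simp [bM, bern_nat]
  | succ m ih =>
    intro c0 c1 c2 c3 c4
    rw [bM_succ, ih]
    have : (fun k : ℕ => c0 + c1 * ((k + 1 : ℕ) : ℝ) + c2 * ((k + 1 : ℕ) : ℝ) ^ 2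
        + c3 * ((k + 1 : ℕ) : ℝ) ^ 3 + c4 * ((k + 1 : ℕ) : ℝ) ^ 4)
        = (fun k : ℕ => (c0 + c1 + c2 + c3 + c4) + (c1 + 2 * c2 + 3 * c3 + 4 * c4) * (k : ℝ)
          + (c2 + 3 * c3 + 6 * c4) * (k:ℝ) ^ 2 + (c3 + 4 * c4) * (k:ℝ) ^ 3 + c4 * (k:ℝ) ^ 4) := by
      funext k
      push_cast
      ring
    rw [this, ih]
    push_cast
    ring

lemma bM_congr (m : ℕ) (x : ℝ) (g h : ℕ → ℝ) (H : ∀ k ≤ m, g k = h k) : bM m x g = bM m x h := by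
  unfold bM
  refine Finset.sum_congr rfl fun k hk => ?_
  rw [H k (by have := Finset.mem_range.mp hk; omega)]

lemma beta_rec (k l : ℕ) : ((k:ℝ) + 1) * ∫ t in (0:ℝ)..1, t ^ k * (1 - t) ^ (l + 1)
    = (l + 1) * ∫ t in (0:ℝ)..1, t ^ (k + 1) * (1 - t) ^ l := by
  have hd : ∀ t ∈ Set.uIcc (0:ℝ) 1, HasDerivAt (fun t : ℝ => t ^ (k + 1) * (1 - t) ^ (l + 1))
      (((k:ℝ) + 1) * (t ^ k * (1 - t) ^ (l + 1)) - (l + 1) * (t ^ (k + 1) * (1 - t) ^ l)) t := by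
    intro t _
    have h1 := (hasDerivAt_pow (k + 1) t)
    have h2 := ((hasDerivAt_id t).const_sub 1).pow (l + 1)
    have := h1.mul h2
    convert! this using 1
    simp
    ring
  have h := intervalIntegral.integral_eq_sub_of_hasDerivAt hd
    (Continuous.intervalIntegrable (by fun_prop) _ _)
  rw [intervalIntegral.integral_sub (Continuous.intervalIntegrable (by fun_prop) _ _)
    (Continuous.intervalIntegrable (by fun_prop) _ _), intervalIntegral.integral_const_mul,
    intervalIntegral.integral_const_mul] at h
  simp at h
  linarith

lemma beta_val (l : ℕ) : ∀ k : ℕ, ∫ t in (0:ℝ)..1, t ^ k * (1 - t) ^ l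
    = (k.factorial * l.factorial : ℝ) / (k + l + 1).factorial := by
  induction l with
  | zero =>
    intro k
    simp [Nat.factorial_succ]
    field_simp
  | succ l ih =>
    intro k
    have h := beta_rec k l
    rw [ih] at h
    have hk : (k:ℝ) + 1 ≠ 0 := by positivity
    apply mul_left_cancel₀ hk
    rw [h, show k + 1 + l + 1 = k + (l + 1) + 1 by ring, Nat.factorial_succ k, Nat.factorial_succ l]
    push_cast
    ring

lemma bern_moment (n k j : ℕ) (hk : k ≤ n) :
    ((n:ℝ) + 1) * ∫ t in (0:ℝ)..1, bern n (k : ℤ) t * t ^ j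
    = ((n + 1).factorial * (k + j).factorial : ℝ) / (k.factorial * (n + 1 + j).factorial) := by
  have h : ∀ t : ℝ, bern n (k : ℤ) t * t ^ j
      = (n.choose k : ℝ) * (t ^ (k + j) * (1 - t) ^ (n - k)) := by
    intro t
    rw [bern_nat]
    ring
  simp_rw [h]
  rw [intervalIntegral.integral_const_mul, beta_val, Nat.cast_choose ℝ hk,
    show k + j + (n - k) + 1 = n + 1 + j by omega, Nat.factorial_succ n]
  have : ((n - k).factorial : ℝ) ≠ 0 := by positivity
  push_cast
  field_simp

lemma DM1_eq (a0 a1 : ℕ → ℝ) (m : ℕ) (f : ℝ → ℝ) (x : ℝ) (G : ℕ → ℝ)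
    (hG : ∀ k ≤ m + 1, (((m + 1 : ℕ) : ℝ) + 1) * ∫ t in (0:ℝ)..1, bern (m + 1) (k : ℤ) t * f t = G k) :
    DM1 a0 a1 (m + 1) f x = (a1 (m + 1) * x + a0 (m + 1)) * bM m x G
      + (a1 (m + 1) * (1 - x) + a0 (m + 1)) * bM m x (fun k => G (k + 1)) := by
  unfold DM1 pM1
  rw [Finset.mul_sum]
  have : ∀ k ∈ Finset.range (m + 1 + 1), (((m + 1 : ℕ) : ℝ) + 1) *
      (((a1 (m + 1) * x + a0 (m + 1)) * bern (m + 1 - 1) k x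
        + (a1 (m + 1) * (1 - x) + a0 (m + 1)) * bern (m + 1 - 1) ((k : ℤ) - 1) x) *
        ∫ t in (0:ℝ)..1, bern (m + 1) (k : ℤ) t * f t)
      = (a1 (m + 1) * x + a0 (m + 1)) * (bern m k x * G k)
        + (a1 (m + 1) * (1 - x) + a0 (m + 1)) * (bern m ((k : ℤ) - 1) x * G k) := by
    intro k hk
    rw [← hG k (by have := Finset.mem_range.mp hk; omega), Nat.add_sub_cancel]
    ring
  rw [Finset.sum_congr rfl this, Finset.sum_add_distrib, ← Finset.mul_sum, ← Finset.mul_sum]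
  congr 2
  · rw [Finset.sum_range_succ]
    unfold bM
    simp
    left
    have := bern_nat m (m + 1) x
    push_cast at this
    rw [this]
    simp
  · rw [Finset.sum_range_succ']
    unfold bM
    simp [bern_neg_one]

lemma DM1_mom0 (a0 a1 : ℕ → ℝ) (m : ℕ) (x : ℝ) (hA : 2 * a0 (m + 1) + a1 (m + 1) = 1) :
    DM1 a0 a1 (m + 1) (fun _ => 1) x = 1 := by
  rw [DM1_eq a0 a1 m _ x (fun _ => 1)]
  · have h := bM_poly m x 1 0 0 0 0
    simp at h
    simp only [h]
    linarith
  · intro k hk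
    have := bern_moment (m + 1) k 0 hk
    simp only [pow_zero] at this
    rw [this]
    simp
    field_simp

/-- conditional moments -/
lemma cm1 (n k : ℕ) (hk : k ≤ n) :
    ((n:ℝ) + 1) * ∫ t in (0:ℝ)..1, bern n (k : ℤ) t * t = ((k:ℝ) + 1) / (n + 2) := by
  have := bern_moment n k 1 hk
  simp only [pow_one] at this
  rw [this]
  simp only [Nat.factorial_succ]
  push_cast
  field_simp
  ring

lemma cm2 (n k : ℕ) (hk : k ≤ n) :
    ((n:ℝ) + 1) * ∫ t in (0:ℝ)..1, bern n (k : ℤ) t * t ^ 2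
      = ((k:ℝ) + 1) * (k + 2) / ((n + 2) * (n + 3)) := by
  rw [bern_moment n k 2 hk]
  simp only [Nat.factorial_succ]
  push_cast
  field_simp
  ring

lemma cm3 (n k : ℕ) (hk : k ≤ n) :
    ((n:ℝ) + 1) * ∫ t in (0:ℝ)..1, bern n (k : ℤ) t * t ^ 3
      = ((k:ℝ) + 1) * (k + 2) * (k + 3) / ((n + 2) * (n + 3) * (n + 4)) := by
  rw [bern_moment n k 3 hk]
  simp only [Nat.factorial_succ]
  push_cast
  field_simp
  ring

lemma cm4 (n k : ℕ) (hk : k ≤ n) :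
    ((n:ℝ) + 1) * ∫ t in (0:ℝ)..1, bern n (k : ℤ) t * t ^ 4
      = ((k:ℝ) + 1) * (k + 2) * (k + 3) * (k + 4) / ((n + 2) * (n + 3) * (n + 4) * (n + 5)) := by
  rw [bern_moment n k 4 hk]
  simp only [Nat.factorial_succ]
  push_cast
  field_simp
  ring

lemma DM1_lin (a0 a1 : ℕ → ℝ) (n : ℕ) (x c d : ℝ) (f g : ℝ → ℝ)
    (hf : ContinuousOn f (Set.Icc 0 1)) (hg : ContinuousOn g (Set.Icc 0 1)) :
    DM1 a0 a1 n (fun t => c * f t + d * g t) x = c * DM1 a0 a1 n f x + d * DM1 a0 a1 n g x := by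
  unfold DM1
  rw [mul_left_comm c, mul_left_comm d, ← mul_add, Finset.mul_sum (a := c), Finset.mul_sum (a := d),
    ← Finset.sum_add_distrib]
  congr 1
  refine Finset.sum_congr rfl fun k _ => ?_
  have hi : ∀ f : ℝ → ℝ, ContinuousOn f (Set.Icc 0 1) →
      IntervalIntegrable (fun t => bern n (k : ℤ) t * f t) MeasureTheory.volume 0 1 := by
    intro f hf
    apply ContinuousOn.intervalIntegrable
    rw [Set.uIcc_of_le zero_le_one]
    exact (bern_cont n k).continuousOn.mul hf
  have : ∀ t, bern n (k : ℤ) t * (c * f t + d * g t)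
      = c * (bern n (k : ℤ) t * f t) + d * (bern n (k : ℤ) t * g t) := fun t => by ring
  simp_rw [this]
  rw [intervalIntegral.integral_add ((hi f hf).const_mul c) ((hi g hg).const_mul d),
    intervalIntegral.integral_const_mul, intervalIntegral.integral_const_mul]
  ring

lemma DM1_mono (a0 a1 : ℕ → ℝ) (m : ℕ) (x : ℝ) (hx : x ∈ Set.Icc (0:ℝ) 1) (f g : ℝ → ℝ)
    (h0 : ∀ n, 0 ≤ a0 n) (h01 : ∀ n, 0 ≤ a0 n + a1 n)
    (hf : ContinuousOn f (Set.Icc 0 1)) (hg : ContinuousOn g (Set.Icc 0 1))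
    (hfg : ∀ t ∈ Set.Icc (0:ℝ) 1, f t ≤ g t) :
    DM1 a0 a1 (m + 1) f x ≤ DM1 a0 a1 (m + 1) g x := by
  rw [DM1_eq a0 a1 m f x _ (fun k _ => rfl), DM1_eq a0 a1 m g x _ (fun k _ => rfl)]
  have key : ∀ k : ℕ, (((m + 1 : ℕ) : ℝ) + 1) * ∫ t in (0:ℝ)..1, bern (m + 1) (k : ℤ) t * f t ≤
      (((m + 1 : ℕ) : ℝ) + 1) * ∫ t in (0:ℝ)..1, bern (m + 1) (k : ℤ) t * g t := by
    intro k
    have hi : ∀ f : ℝ → ℝ, ContinuousOn f (Set.Icc 0 1) →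
        IntervalIntegrable (fun t => bern (m + 1) (k : ℤ) t * f t) MeasureTheory.volume 0 1 := by
      intro f hf
      apply ContinuousOn.intervalIntegrable
      rw [Set.uIcc_of_le zero_le_one]
      exact (bern_cont (m + 1) k).continuousOn.mul hf
    apply mul_le_mul_of_nonneg_left _ (by positivity)
    apply intervalIntegral.integral_mono_on zero_le_one (hi f hf) (hi g hg)
    intro t ht
    exact mul_le_mul_of_nonneg_left (hfg t ht) (bern_nonneg _ _ _ ht)
  have hA : 0 ≤ a1 (m + 1) * x + a0 (m + 1) := by
    nlinarith [hx.1, hx.2, h0 (m + 1), h01 (m + 1)]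
  have hB : 0 ≤ a1 (m + 1) * (1 - x) + a0 (m + 1) := by
    nlinarith [hx.1, hx.2, h0 (m + 1), h01 (m + 1)]
  have hM : ∀ g h : ℕ → ℝ, (∀ k, g k ≤ h k) → bM m x g ≤ bM m x h := by
    intro g h H
    exact Finset.sum_le_sum fun k _ => mul_le_mul_of_nonneg_left (H k) (bern_nonneg _ _ _ hx)
  apply add_le_add
  · exact mul_le_mul_of_nonneg_left (hM _ _ fun k => key k) hA
  · exact mul_le_mul_of_nonneg_left (hM _ _ fun k => key (k + 1)) hB

/-- polynomial in `k` moments -/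
lemma DM1_raw (a0 a1 : ℕ → ℝ) (m : ℕ) (x : ℝ) (f : ℝ → ℝ) (D c0 c1 c2 c3 c4 : ℝ)
    (hG : ∀ k ≤ m + 1, (((m + 1 : ℕ) : ℝ) + 1) * ∫ t in (0:ℝ)..1, bern (m + 1) (k : ℤ) t * f t
      = (c0 + c1 * k + c2 * (k:ℝ) ^ 2 + c3 * (k:ℝ) ^ 3 + c4 * (k:ℝ) ^ 4) / D) :
    DM1 a0 a1 (m + 1) f x = ((a1 (m + 1) * x + a0 (m + 1)) *
      (c0 + c1 * (m * x) + c2 * (m * x + m * (m - 1) * x ^ 2)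
      + c3 * (m * x + 3 * (m * (m - 1)) * x ^ 2 + m * (m - 1) * (m - 2) * x ^ 3)
      + c4 * (m * x + 7 * (m * (m - 1)) * x ^ 2 + 6 * (m * (m - 1) * (m - 2)) * x ^ 3
        + m * (m - 1) * (m - 2) * (m - 3) * x ^ 4))
      + (a1 (m + 1) * (1 - x) + a0 (m + 1)) *
      ((c0 + c1 + c2 + c3 + c4) + (c1 + 2 * c2 + 3 * c3 + 4 * c4) * (m * x)
      + (c2 + 3 * c3 + 6 * c4) * (m * x + m * (m - 1) * x ^ 2)
      + (c3 + 4 * c4) * (m * x + 3 * (m * (m - 1)) * x ^ 2 + m * (m - 1) * (m - 2) * x ^ 3)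
      + c4 * (m * x + 7 * (m * (m - 1)) * x ^ 2 + 6 * (m * (m - 1) * (m - 2)) * x ^ 3
        + m * (m - 1) * (m - 2) * (m - 3) * x ^ 4))) / D := by
  rw [DM1_eq a0 a1 m f x _ hG, ← bM_poly, ← bM_poly]
  have hdiv : ∀ g : ℕ → ℝ, bM m x (fun k => g k / D) = bM m x g / D := by
    intro g
    unfold bM
    rw [Finset.sum_div]
    exact Finset.sum_congr rfl fun k _ => by ring
  rw [hdiv, hdiv (fun k => c0 + c1 * ((k + 1 : ℕ) : ℝ) + c2 * ((k + 1 : ℕ) : ℝ) ^ 2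
        + c3 * ((k + 1 : ℕ) : ℝ) ^ 3 + c4 * ((k + 1 : ℕ) : ℝ) ^ 4)]
  rw [add_div, mul_div_assoc, mul_div_assoc]
  congr 4
  funext k
  push_cast
  ring

lemma DM1_m1 (a0 a1 : ℕ → ℝ) (m : ℕ) (x : ℝ) (hA : 2 * a0 (m + 1) + a1 (m + 1) = 1) :
    DM1 a0 a1 (m + 1) (fun t => t - x) x
      = (1 - 2 * x) * (2 * a1 (m + 1) + 3 * a0 (m + 1)) / (((m + 1 : ℕ) : ℝ) + 2) := by
  have e : (fun t : ℝ => t - x) = fun t => 1 * (fun t => t) t + (-x) * (fun _ => (1:ℝ)) t := by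
    funext t; simp; ring
  rw [e, DM1_lin _ _ _ _ _ _ _ _ (by fun_prop) (by fun_prop), DM1_mom0 _ _ _ _ hA,
    DM1_raw a0 a1 m x (fun t => t) (((m + 1 : ℕ) : ℝ) + 2) 1 1 0 0 0
      (fun k hk => by rw [cm1 _ _ hk]; congr 1; ring)]
  have ha : a1 (m + 1) = 1 - 2 * a0 (m + 1) := by linarith
  rw [ha]
  push_cast
  field_simp
  ring

lemma DM1_m2 (a0 a1 : ℕ → ℝ) (m : ℕ) (x : ℝ) (hA : 2 * a0 (m + 1) + a1 (m + 1) = 1) :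
    DM1 a0 a1 (m + 1) (fun t => (t - x) ^ 2) x
      = (2 * ((m + 1 : ℕ) : ℝ) * (x * (1 - x))
          + (a1 (m + 1) * x + a0 (m + 1)) * (2 - 10 * x + 14 * x ^ 2)
          + (a1 (m + 1) * (1 - x) + a0 (m + 1)) * (6 - 18 * x + 14 * x ^ 2))
        / ((((m + 1 : ℕ) : ℝ) + 2) * (((m + 1 : ℕ) : ℝ) + 3)) := by
  have e : (fun t : ℝ => (t - x) ^ 2) = fun t => 1 * (fun t => t ^ 2) t + (-2 * x) *
      (fun t => 1 * (fun t => t - x) t + (x / 2) * (fun _ => (1:ℝ)) t) t := by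
    funext t; simp; ring
  rw [e, DM1_lin _ _ _ _ _ _ _ _ (by fun_prop) (by fun_prop),
    DM1_lin _ _ _ _ _ _ _ _ (by fun_prop) (by fun_prop), DM1_mom0 _ _ _ _ hA,
    DM1_m1 _ _ _ _ hA, 
    DM1_raw a0 a1 m x (fun t => t ^ 2) ((((m + 1 : ℕ) : ℝ) + 2) * (((m + 1 : ℕ) : ℝ) + 3)) 2 3 1 0 0
      (fun k hk => by rw [cm2 _ _ hk]; congr 1; ring)]
  have ha : a1 (m + 1) = 1 - 2 * a0 (m + 1) := by linarith
  rw [ha]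
  push_cast
  field_simp
  ring

lemma DM1_m4 (a0 a1 : ℕ → ℝ) (m : ℕ) (x : ℝ) (hA : 2 * a0 (m + 1) + a1 (m + 1) = 1) :
    DM1 a0 a1 (m + 1) (fun t => (t - x) ^ 4) x
      = ((a1 (m + 1) * x + a0 (m + 1)) * (24 - 216 * x + 744 * x ^ 2 - 1176 * x ^ 3 + 744 * x ^ 4
            + ((m + 1 : ℕ) : ℝ) * (72 * x - 396 * x ^ 2 + 720 * x ^ 3 - 396 * x ^ 4)
            + ((m + 1 : ℕ) : ℝ) ^ 2 * (12 * x ^ 2 - 24 * x ^ 3 + 12 * x ^ 4))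
          + (a1 (m + 1) * (1 - x) + a0 (m + 1)) *
            (120 - 720 * x + 1680 * x ^ 2 - 1800 * x ^ 3 + 744 * x ^ 4
            + ((m + 1 : ℕ) : ℝ) * (144 * x - 612 * x ^ 2 + 864 * x ^ 3 - 396 * x ^ 4)
            + ((m + 1 : ℕ) : ℝ) ^ 2 * (12 * x ^ 2 - 24 * x ^ 3 + 12 * x ^ 4)))
        / ((((m + 1 : ℕ) : ℝ) + 2) * (((m + 1 : ℕ) : ℝ) + 3) * (((m + 1 : ℕ) : ℝ) + 4)
          * (((m + 1 : ℕ) : ℝ) + 5)) := by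
  have e : (fun t : ℝ => (t - x) ^ 4) = fun t => 1 * (fun t => t ^ 4) t + 1 *
      (fun t => (-4 * x) * (fun t => t ^ 3) t + 1 *
        (fun t => (6 * x ^ 2) * (fun t => t ^ 2) t + 1 *
          (fun t => (-4 * x ^ 3) * (fun t => t - x) t + (-3 * x ^ 4) * (fun _ => (1:ℝ)) t) t) t) t := by
    funext t; simp; ring
  rw [e, DM1_lin _ _ _ _ _ _ _ _ (by fun_prop) (by fun_prop),
    DM1_lin _ _ _ _ _ _ _ _ (by fun_prop) (by fun_prop),
    DM1_lin _ _ _ _ _ _ _ _ (by fun_prop) (by fun_prop),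
    DM1_lin _ _ _ _ _ _ _ _ (by fun_prop) (by fun_prop), DM1_mom0 _ _ _ _ hA,
    DM1_m1 _ _ _ _ hA, 
    DM1_raw a0 a1 m x (fun t => t ^ 2) ((((m + 1 : ℕ) : ℝ) + 2) * (((m + 1 : ℕ) : ℝ) + 3)) 2 3 1 0 0
      (fun k hk => by rw [cm2 _ _ hk]; congr 1; ring),
    DM1_raw a0 a1 m x (fun t => t ^ 3) ((((m + 1 : ℕ) : ℝ) + 2) * (((m + 1 : ℕ) : ℝ) + 3)
      * (((m + 1 : ℕ) : ℝ) + 4)) 6 11 6 1 0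
      (fun k hk => by rw [cm3 _ _ hk]; congr 1; ring),
    DM1_raw a0 a1 m x (fun t => t ^ 4) ((((m + 1 : ℕ) : ℝ) + 2) * (((m + 1 : ℕ) : ℝ) + 3)
      * (((m + 1 : ℕ) : ℝ) + 4) * (((m + 1 : ℕ) : ℝ) + 5)) 24 50 35 10 1
      (fun k hk => by rw [cm4 _ _ hk]; congr 1; ring)]
  have ha : a1 (m + 1) = 1 - 2 * a0 (m + 1) := by linarith
  rw [ha]
  push_cast
  field_simp
  ring

lemma conv_bound (A B u v C : ℝ) (hA : 0 ≤ A) (hB : 0 ≤ B) (hAB : A + B = 1)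
    (hu : u ≤ C) (hv : v ≤ C) : A * u + B * v ≤ C := by
  have h1 := mul_le_mul_of_nonneg_left hu hA
  have h2 := mul_le_mul_of_nonneg_left hv hB
  have : A * C + B * C = C := by rw [← add_mul, hAB, one_mul]
  linarith

lemma DM1_m4_bound (a0 a1 : ℕ → ℝ) (m : ℕ) (x : ℝ) (hx : x ∈ Set.Icc (0:ℝ) 1)
    (hA : 2 * a0 (m + 1) + a1 (m + 1) = 1)
    (h0 : ∀ n, 0 ≤ a0 n) (h01 : ∀ n, 0 ≤ a0 n + a1 n) :
    ((m + 1 : ℕ) : ℝ) * DM1 a0 a1 (m + 1) (fun t => (t - x) ^ 4) x ≤ 4000 / ((m + 1 : ℕ) : ℝ) := by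
  have hA' : 0 ≤ a1 (m + 1) * x + a0 (m + 1) := by
    nlinarith [hx.1, hx.2, h0 (m + 1), h01 (m + 1)]
  have hB' : 0 ≤ a1 (m + 1) * (1 - x) + a0 (m + 1) := by
    nlinarith [hx.1, hx.2, h0 (m + 1), h01 (m + 1)]
  rw [DM1_m4 _ _ _ _ hA]
  have hN : (1:ℝ) ≤ ((m + 1 : ℕ) : ℝ) := by push_cast; linarith [Nat.cast_nonneg (α := ℝ) m]
  generalize ((m + 1 : ℕ) : ℝ) = N at hN ⊢
  obtain ⟨hx0, hx1⟩ := hx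
  have p2 : x ^ 2 ≤ 1 := pow_le_one₀ hx0 hx1
  have p3 : x ^ 3 ≤ 1 := pow_le_one₀ hx0 hx1
  have p4 : x ^ 4 ≤ 1 := pow_le_one₀ hx0 hx1
  have q2 : 0 ≤ x ^ 2 := by positivity
  have q3 : 0 ≤ x ^ 3 := by positivity
  have q4 : 0 ≤ x ^ 4 := by positivity
  have hN2 : N ≤ N ^ 2 := by nlinarith
  have hN3 : 1 ≤ N ^ 2 := by nlinarith
  have key : ∀ c d e : ℝ, c ≤ 2544 → d ≤ 1008 → e ≤ 24 → c + N * d + N ^ 2 * e ≤ 4000 * N ^ 2 := by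
    intro c d e hc hd he
    have := mul_le_mul_of_nonneg_left hd (by linarith : 0 ≤ N)
    have := mul_le_mul_of_nonneg_left he (by linarith : 0 ≤ N ^ 2)
    nlinarith
  have hb := conv_bound _ _ _ _ (4000 * N ^ 2) hA' hB' (by linarith)
    (key (24 - 216 * x + 744 * x ^ 2 - 1176 * x ^ 3 + 744 * x ^ 4)
      (72 * x - 396 * x ^ 2 + 720 * x ^ 3 - 396 * x ^ 4) (12 * x ^ 2 - 24 * x ^ 3 + 12 * x ^ 4)
      (by linarith) (by linarith) (by linarith))
    (key (120 - 720 * x + 1680 * x ^ 2 - 1800 * x ^ 3 + 744 * x ^ 4)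
      (144 * x - 612 * x ^ 2 + 864 * x ^ 3 - 396 * x ^ 4) (12 * x ^ 2 - 24 * x ^ 3 + 12 * x ^ 4)
      (by linarith) (by linarith) (by linarith))
  have hden : N ^ 4 ≤ (N + 2) * (N + 3) * (N + 4) * (N + 5) := by
    have : 0 ≤ N := by linarith
    have h : (N + 2) * (N + 3) * (N + 4) * (N + 5) = N ^ 4 + (14 * N ^ 3 + 71 * N ^ 2 + 154 * N + 120) := by
      ring
    rw [h]
    have : 0 ≤ 14 * N ^ 3 + 71 * N ^ 2 + 154 * N + 120 := by positivity
    linarith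
  have hNp : 0 < N := by linarith
  calc _ ≤ N * (4000 * N ^ 2 / ((N + 2) * (N + 3) * (N + 4) * (N + 5))) := by
        gcongr
    _ ≤ N * (4000 * N ^ 2 / N ^ 4) := by gcongr
    _ = 4000 / N := by field_simp

lemma DM1_m2_bound (a0 a1 : ℕ → ℝ) (m : ℕ) (x : ℝ) (hx : x ∈ Set.Icc (0:ℝ) 1)
    (hA : 2 * a0 (m + 1) + a1 (m + 1) = 1)
    (h0 : ∀ n, 0 ≤ a0 n) (h01 : ∀ n, 0 ≤ a0 n + a1 n) :
    |((m + 1 : ℕ) : ℝ) * DM1 a0 a1 (m + 1) (fun t => (t - x) ^ 2) x - 2 * (x * (1 - x))|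
      ≤ 50 / ((m + 1 : ℕ) : ℝ) := by
  have hA' : 0 ≤ a1 (m + 1) * x + a0 (m + 1) := by
    nlinarith [hx.1, hx.2, h0 (m + 1), h01 (m + 1)]
  have hB' : 0 ≤ a1 (m + 1) * (1 - x) + a0 (m + 1) := by
    nlinarith [hx.1, hx.2, h0 (m + 1), h01 (m + 1)]
  rw [DM1_m2 _ _ _ _ hA]
  have hN : (1:ℝ) ≤ ((m + 1 : ℕ) : ℝ) := by push_cast; linarith [Nat.cast_nonneg (α := ℝ) m]
  generalize ((m + 1 : ℕ) : ℝ) = N at hN ⊢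
  obtain ⟨hx0, hx1⟩ := hx
  have p2 : x ^ 2 ≤ 1 := pow_le_one₀ hx0 hx1
  have q2 : 0 ≤ x ^ 2 := by positivity
  have hu := conv_bound _ _ (2 - 10 * x + 14 * x ^ 2) (6 - 18 * x + 14 * x ^ 2) 20 hA' hB' (by linarith)
    (by linarith) (by linarith)
  have hl := conv_bound _ _ (-(2 - 10 * x + 14 * x ^ 2)) (-(6 - 18 * x + 14 * x ^ 2)) 20 hA' hB'
    (by linarith) (by linarith) (by linarith)
  have hq0 : 0 ≤ x * (1 - x) := mul_nonneg hx0 (by linarith)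
  have hq1 : x * (1 - x) ≤ 1 := by nlinarith
  generalize x * (1 - x) = q at *
  have hr : |(a1 (m + 1) * x + a0 (m + 1)) * (2 - 10 * x + 14 * x ^ 2)
      + (a1 (m + 1) * (1 - x) + a0 (m + 1)) * (6 - 18 * x + 14 * x ^ 2)| ≤ 20 := by
    rw [abs_le]; constructor <;> linarith
  rw [add_assoc]
  generalize (a1 (m + 1) * x + a0 (m + 1)) * (2 - 10 * x + 14 * x ^ 2)
      + (a1 (m + 1) * (1 - x) + a0 (m + 1)) * (6 - 18 * x + 14 * x ^ 2) = r at *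
  have hNp : 0 < N := by linarith
  have e : N * ((2 * N * q + r) / ((N + 2) * (N + 3))) - 2 * q
      = (N * r - 10 * N * q - 12 * q) / ((N + 2) * (N + 3)) := by
    field_simp
    ring
  rw [e, abs_div, abs_of_pos (by positivity : 0 < (N + 2) * (N + 3)), div_le_div_iff₀ (by positivity) hNp]
  have h1 : |N * r - 10 * N * q - 12 * q| ≤ 50 * N := by
    rw [abs_le] at hr ⊢
    constructor <;> nlinarith
  calc _ ≤ 50 * N * N := by gcongr
    _ ≤ 50 * ((N + 2) * (N + 3)) := by nlinarith

lemma taylor_bound (f f' f'' : ℝ → ℝ)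
    (hf' : ∀ y ∈ Set.Icc (0:ℝ) 1, HasDerivWithinAt f (f' y) (Set.Icc 0 1) y)
    (hf'' : ∀ y ∈ Set.Icc (0:ℝ) 1, HasDerivWithinAt f' (f'' y) (Set.Icc 0 1) y)
    (x t η : ℝ) (hx : x ∈ Set.Icc (0:ℝ) 1) (ht : t ∈ Set.Icc (0:ℝ) 1)
    (hη : ∀ s ∈ Set.uIcc x t, |f'' s - f'' x| ≤ η) :
    |f t - f x - f' x * (t - x) - f'' x / 2 * (t - x) ^ 2| ≤ η * (t - x) ^ 2 := by
  have hsub : Set.uIcc x t ⊆ Set.Icc 0 1 := Set.uIcc_subset_Icc hx ht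
  have hη0 : 0 ≤ η := le_trans (abs_nonneg _) (hη x Set.left_mem_uIcc)
  have h1 : ∀ s ∈ Set.uIcc x t, |f' s - f' x - f'' x * (s - x)| ≤ η * |t - x| := by
    intro s hs
    have := (convex_uIcc x t).norm_image_sub_le_of_norm_hasDerivWithin_le
      (f := fun s => f' s - f'' x * s) (f' := fun s => f'' s - f'' x) (C := η)
      (fun s hs => by
        have := ((hf'' s (hsub hs)).mono hsub).sub
          ((hasDerivWithinAt_id s (Set.uIcc x t)).const_mul (f'' x))
        convert! this using 1
        simp) hη Set.left_mem_uIcc hs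
    have h2 : |s - x| ≤ |t - x| := Set.abs_sub_left_of_mem_uIcc hs
    calc |f' s - f' x - f'' x * (s - x)| = ‖(f' s - f'' x * s) - (f' x - f'' x * x)‖ := by
          rw [Real.norm_eq_abs]; congr 1; ring
      _ ≤ η * ‖s - x‖ := this
      _ ≤ η * |t - x| := by rw [Real.norm_eq_abs]; gcongr
  have := (convex_uIcc x t).norm_image_sub_le_of_norm_hasDerivWithin_le
      (f := fun s => f s - f' x * s - f'' x / 2 * (s - x) ^ 2)
      (f' := fun s => f' s - f' x - f'' x * (s - x)) (C := η * |t - x|)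
      (fun s hs => by
        have a := ((hf' s (hsub hs)).mono hsub).sub
          ((hasDerivWithinAt_id s (Set.uIcc x t)).const_mul (f' x))
        have b := ((((hasDerivWithinAt_id s (Set.uIcc x t)).sub_const x).pow 2).const_mul (f'' x / 2))
        have c := a.sub b
        convert! c using 1
        simp
        ring) h1 Set.left_mem_uIcc Set.right_mem_uIcc
  calc _ = ‖(f t - f' x * t - f'' x / 2 * (t - x) ^ 2) - (f x - f' x * x - f'' x / 2 * (x - x) ^ 2)‖ := by
        rw [Real.norm_eq_abs]; congr 1; ring
    _ ≤ η * |t - x| * ‖t - x‖ := this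
    _ = η * (t - x) ^ 2 := by rw [Real.norm_eq_abs, mul_assoc, abs_mul_abs_self]; ring

lemma taylor_unif (f f' f'' : ℝ → ℝ)
    (hf' : ∀ y ∈ Set.Icc (0:ℝ) 1, HasDerivWithinAt f (f' y) (Set.Icc 0 1) y)
    (hf'' : ∀ y ∈ Set.Icc (0:ℝ) 1, HasDerivWithinAt f' (f'' y) (Set.Icc 0 1) y)
    (hcont : ContinuousOn f'' (Set.Icc 0 1)) (η : ℝ) (hη : 0 < η) :
    ∃ C : ℝ, 0 ≤ C ∧ ∀ x ∈ Set.Icc (0:ℝ) 1, ∀ t ∈ Set.Icc (0:ℝ) 1,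
      |f t - f x - f' x * (t - x) - f'' x / 2 * (t - x) ^ 2| ≤ η * (t - x) ^ 2 + C * (t - x) ^ 4 := by
  obtain ⟨K, hK⟩ := isCompact_Icc.exists_bound_of_continuousOn hcont
  have hK0 : 0 ≤ K := le_trans (norm_nonneg _) (hK 0 (by simp))
  have huc := isCompact_Icc.uniformContinuousOn_of_continuous hcont
  rw [Metric.uniformContinuousOn_iff] at huc
  obtain ⟨δ, hδ, H⟩ := huc η hη
  refine ⟨2 * K / δ ^ 2, by positivity, fun x hx t ht => ?_⟩
  have hsub : Set.uIcc x t ⊆ Set.Icc 0 1 := Set.uIcc_subset_Icc hx ht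
  by_cases h : |t - x| < δ
  · have := taylor_bound f f' f'' hf' hf'' x t η hx ht (fun s hs => by
      have h2 : |s - x| ≤ |t - x| := Set.abs_sub_left_of_mem_uIcc hs
      exact (H s (hsub hs) x hx (lt_of_le_of_lt h2 h)).le)
    have h4 : 0 ≤ 2 * K / δ ^ 2 * (t - x) ^ 4 := by positivity
    linarith
  · have := taylor_bound f f' f'' hf' hf'' x t (2 * K) hx ht (fun s hs => by
      have h1 := hK s (hsub hs)
      have h2 := hK x hx
      rw [Real.norm_eq_abs] at h1 h2
      have := abs_sub (f'' s) (f'' x)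
      linarith)
    have hd : δ ^ 2 ≤ (t - x) ^ 2 := by
      rw [← sq_abs (t - x)]
      have := not_lt.mp h
      gcongr
    have h4 : 2 * K * (t - x) ^ 2 ≤ 2 * K / δ ^ 2 * (t - x) ^ 4 := by
      rw [div_mul_eq_mul_div, le_div_iff₀ (by positivity), show 2 * K * (t - x) ^ 4 = 2 * K * (t - x) ^ 2 * (t - x) ^ 2 by ring]
      gcongr
    have h5 : 0 ≤ η * (t - x) ^ 2 := by positivity
    linarith

theorem DM1_voronovskaja_positive_case (a0 a1 : ℕ → ℝ) (l0 l1 : ℝ)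
    (hl0 : Tendsto a0 atTop (𝓝 l0)) (hl1 : Tendsto a1 atTop (𝓝 l1))
    (hA : ∀ n, 2 * a0 n + a1 n = 1)
    (h0 : ∀ n, 0 ≤ a0 n) (h01 : ∀ n, 0 ≤ a0 n + a1 n)
    (f f' f'' : ℝ → ℝ)
    (hf' : ∀ y ∈ Set.Icc (0:ℝ) 1, HasDerivWithinAt f (f' y) (Set.Icc 0 1) y)
    (hf'' : ∀ y ∈ Set.Icc (0:ℝ) 1, HasDerivWithinAt f' (f'' y) (Set.Icc 0 1) y)
    (hcont : ContinuousOn f'' (Set.Icc 0 1)) :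
    TendstoUniformlyOn (fun (n : ℕ) x => (n : ℝ) * (DM1 a0 a1 n f x - f x))
      (fun x => (1 - 2 * x) * (2 * l1 + 3 * l0) * f' x
        + x * (1 - x) * (2 * l0 + l1) * f'' x) atTop (Set.Icc 0 1) := by
  have hfc : ContinuousOn f (Set.Icc 0 1) := fun y hy => (hf' y hy).continuousWithinAt
  have hfc' : ContinuousOn f' (Set.Icc 0 1) := fun y hy => (hf'' y hy).continuousWithinAt
  obtain ⟨K1, hK1⟩ := isCompact_Icc.exists_bound_of_continuousOn hfc'
  obtain ⟨K2, hK2⟩ := isCompact_Icc.exists_bound_of_continuousOn hcont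
  simp only [Real.norm_eq_abs] at hK1 hK2
  have hl : 2 * l0 + l1 = 1 := by
    have h1 : Tendsto (fun n => 2 * a0 n + a1 n) atTop (𝓝 (2 * l0 + l1)) :=
      (hl0.const_mul 2).add hl1
    simp only [hA] at h1
    exact tendsto_nhds_unique h1 tendsto_const_nhds |>.symm ▸ rfl
  rw [Metric.tendstoUniformlyOn_iff]
  intro ε hε
  obtain ⟨C, hC0, hC⟩ := taylor_unif f f' f'' hf' hf'' hcont (ε / 200) (by positivity)
  have hn2 : Tendsto (fun n : ℕ => (n : ℝ) / (n + 2)) atTop (𝓝 1) :=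
    tendsto_natCast_div_add_atTop 2
  have he1 : Tendsto (fun n : ℕ => |(n : ℝ) / (n + 2) * (2 * a1 n + 3 * a0 n) - (2 * l1 + 3 * l0)|)
      atTop (𝓝 0) := by
    have h1 := hn2.mul ((hl1.const_mul 2).add (hl0.const_mul 3))
    have h2 := (h1.sub_const (2 * l1 + 3 * l0)).abs
    simpa using h2
  have hinv : ∀ c : ℝ, Tendsto (fun n : ℕ => c / (n : ℝ)) atTop (𝓝 0) := fun c =>
    tendsto_const_div_atTop_nhds_zero_nat c
  have htot : Tendsto (fun n : ℕ =>
      |(n : ℝ) / (n + 2) * (2 * a1 n + 3 * a0 n) - (2 * l1 + 3 * l0)| * K1 + 25 / (n : ℝ) * K2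
        + C * (4000 / (n : ℝ))) atTop (𝓝 0) := by
    have := ((he1.mul_const K1).add ((hinv 25).mul_const K2)).add ((hinv 4000).const_mul C)
    simpa using this
  have hev := htot.eventually (gt_mem_nhds (show (0:ℝ) < ε / 2 by positivity))
  filter_upwards [hev, eventually_ge_atTop 1] with n hn hn1 x hx
  obtain ⟨m, rfl⟩ : ∃ m, n = m + 1 := ⟨n - 1, by omega⟩
  have hm1 := DM1_m1 a0 a1 m x (hA _)
  have hm2 := DM1_m2_bound a0 a1 m x hx (hA _) h0 h01
  have hm4 := DM1_m4_bound a0 a1 m x hx (hA _) h0 h01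
  have hRc : ContinuousOn (fun t => f t - f x - f' x * (t - x) - f'' x / 2 * (t - x) ^ 2)
      (Set.Icc 0 1) := by fun_prop
  have hdec : DM1 a0 a1 (m + 1) f x = f x + f' x * DM1 a0 a1 (m + 1) (fun t => t - x) x
      + f'' x / 2 * DM1 a0 a1 (m + 1) (fun t => (t - x) ^ 2) x
      + DM1 a0 a1 (m + 1) (fun t => f t - f x - f' x * (t - x) - f'' x / 2 * (t - x) ^ 2) x := by
    have e : f = fun t => 1 * (fun t => f t - f x - f' x * (t - x) - f'' x / 2 * (t - x) ^ 2) t + 1 *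
        (fun t => f x * (fun _ => (1:ℝ)) t + 1 *
          (fun t => f' x * (fun t => t - x) t + f'' x / 2 * (fun t => (t - x) ^ 2) t) t) t := by
      funext t; simp; ring
    conv_lhs => rw [e]
    rw [DM1_lin _ _ _ _ _ _ _ _ hRc (by fun_prop),
      DM1_lin _ _ _ _ _ _ _ _ (by fun_prop) (by fun_prop),
      DM1_lin _ _ _ _ _ _ _ _ (by fun_prop) (by fun_prop), DM1_mom0 _ _ _ _ (hA _)]
    ring
  have hbd : |DM1 a0 a1 (m + 1) (fun t => f t - f x - f' x * (t - x) - f'' x / 2 * (t - x) ^ 2) x|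
      ≤ ε / 200 * DM1 a0 a1 (m + 1) (fun t => (t - x) ^ 2) x
        + C * DM1 a0 a1 (m + 1) (fun t => (t - x) ^ 4) x := by
    rw [abs_le, ← DM1_lin _ _ _ _ _ _ _ _ (by fun_prop) (by fun_prop)]
    constructor
    · have e := DM1_lin a0 a1 (m + 1) x (-1) 0
        (fun t => ε / 200 * (t - x) ^ 2 + C * (t - x) ^ 4) (fun _ => 0) (by fun_prop) (by fun_prop)
      simp only [zero_mul, add_zero, neg_one_mul] at e
      rw [← e]
      refine DM1_mono a0 a1 m x hx _ _ h0 h01 (by fun_prop) hRc fun t ht => ?_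
      have := (abs_le.mp (hC x hx t ht)).1
      linarith
    · exact DM1_mono a0 a1 m x hx _ _ h0 h01 hRc (by fun_prop) fun t ht =>
        (abs_le.mp (hC x hx t ht)).2
  have hN : (1:ℝ) ≤ ((m + 1 : ℕ) : ℝ) := by exact_mod_cast hn1
  rw [hdec, hm1, hl, dist_comm, Real.dist_eq]
  generalize DM1 a0 a1 (m + 1) (fun t => f t - f x - f' x * (t - x) - f'' x / 2 * (t - x) ^ 2) x = R at *
  generalize DM1 a0 a1 (m + 1) (fun t => (t - x) ^ 2) x = M2 at *
  generalize DM1 a0 a1 (m + 1) (fun t => (t - x) ^ 4) x = M4 at *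
  generalize ((m + 1 : ℕ) : ℝ) = N at *
  have hNp : 0 < N := by linarith
  have e : N * (f x + f' x * ((1 - 2 * x) * (2 * a1 (m + 1) + 3 * a0 (m + 1)) / (N + 2))
      + f'' x / 2 * M2 + R - f x)
      - ((1 - 2 * x) * (2 * l1 + 3 * l0) * f' x + x * (1 - x) * 1 * f'' x)
      = (1 - 2 * x) * (N / (N + 2) * (2 * a1 (m + 1) + 3 * a0 (m + 1)) - (2 * l1 + 3 * l0)) * f' x
        + (N * M2 - 2 * (x * (1 - x))) / 2 * f'' x + N * R := by
    field_simp
    ring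
  rw [e]
  have t1 : |(1 - 2 * x) * (N / (N + 2) * (2 * a1 (m + 1) + 3 * a0 (m + 1)) - (2 * l1 + 3 * l0)) * f' x|
      ≤ |N / (N + 2) * (2 * a1 (m + 1) + 3 * a0 (m + 1)) - (2 * l1 + 3 * l0)| * K1 := by
    rw [abs_mul, abs_mul]
    have h1 : |1 - 2 * x| ≤ 1 := by
      rw [abs_le]; constructor <;> linarith [hx.1, hx.2]
    have h2 := hK1 x hx
    calc _ ≤ (1 * |N / (N + 2) * (2 * a1 (m + 1) + 3 * a0 (m + 1)) - (2 * l1 + 3 * l0)|) * K1 := by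
          gcongr
      _ = _ := by rw [one_mul]
  have t2 : |(N * M2 - 2 * (x * (1 - x))) / 2 * f'' x| ≤ 25 / N * K2 := by
    rw [abs_mul, abs_div, abs_two]
    have h2 := hK2 x hx
    calc _ ≤ (50 / N) / 2 * K2 := by gcongr
      _ = _ := by ring
  have hM2 : N * M2 ≤ 60 := by
    have h1 := (abs_le.mp hm2).2
    have h2 : 50 / N ≤ 50 := div_le_self (by norm_num) hN
    nlinarith [hx.1, hx.2]
  have t3 : |N * R| ≤ ε / 200 * 60 + C * (4000 / N) := by
    rw [abs_mul, abs_of_pos hNp]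
    calc N * |R| ≤ N * (ε / 200 * M2 + C * M4) := by gcongr
      _ = ε / 200 * (N * M2) + C * (N * M4) := by ring
      _ ≤ _ := by gcongr
  have := abs_add_three ((1 - 2 * x) * (N / (N + 2) * (2 * a1 (m + 1) + 3 * a0 (m + 1)) - (2 * l1 + 3 * l0)) * f' x)
    ((N * M2 - 2 * (x * (1 - x))) / 2 * f'' x) (N * R)
  linarith
end

section
/- Let a_0(n), a_1(n) be bounded convergent sequences satisfying 2a_0(n) + a_1(n) = 1 and, for all n, either a_0(n) < 0 or a_1(n) + a_0(n) < 0, with limits l_0 = lim a_0(n) and l_1 = lim a_1(n). If f ∈ C[0,1] and f is twice differentiable at a point x ∈ [0,1], then lim_{n→∞} n(D_n^{M,1}(f; x) − f(x)) = (1 − 2x)(2l_1 + 3l_0) f′(x) + x(1 − x)(2l_0 + l_1) f″(x); moreover the convergence is uniform on [0,1] if f″ is continuous on [0,1]. -/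
open Filter Topology

namespace DMV

/-- Natural-indexed Bernstein weight. -/
noncomputable def w (n k : ℕ) (t : ℝ) : ℝ := (n.choose k : ℝ) * t ^ k * (1 - t) ^ (n - k)

lemma w_cont (n k : ℕ) : Continuous (w n k) := by unfold w; fun_prop

lemma w_nonneg (n k : ℕ) {t : ℝ} (h : t ∈ Set.Icc (0:ℝ) 1) : 0 ≤ w n k t := by
  have h1 := h.1
  have h2 : 0 ≤ 1 - t := by linarith [h.2]
  unfold w; positivity

lemma w_mul (n k : ℕ) (t : ℝ) :
    w n k t * t = ((k:ℝ) + 1) / ((n:ℝ) + 1) * w (n + 1) (k + 1) t := by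
  have h := Nat.add_one_mul_choose_eq n k
  have h' : ((n:ℝ) + 1) * (n.choose k : ℝ) = ((n+1).choose (k+1) : ℝ) * ((k:ℝ) + 1) := by
    exact_mod_cast h
  have h3 : (n.choose k : ℝ) = ((n+1).choose (k+1) : ℝ) * ((k:ℝ) + 1) / ((n:ℝ) + 1) := by
    field_simp; linarith
  unfold w
  rw [h3, Nat.add_sub_add_right]
  ring

lemma beta_rec (k b : ℕ) :
    ((k:ℝ) + 1) * ∫ t in (0:ℝ)..1, t ^ k * (1 - t) ^ (b + 1)
      = ((b:ℝ) + 1) * ∫ t in (0:ℝ)..1, t ^ (k + 1) * (1 - t) ^ b := by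
  have hd : ∀ t ∈ Set.uIcc (0:ℝ) 1, HasDerivAt (fun t : ℝ => t ^ (k + 1) * (1 - t) ^ (b + 1))
      (((k:ℝ) + 1) * (t ^ k * (1 - t) ^ (b + 1)) - ((b:ℝ) + 1) * (t ^ (k + 1) * (1 - t) ^ b)) t := by
    intro t _
    have h1 : HasDerivAt (fun t : ℝ => t ^ (k + 1)) _ t := hasDerivAt_pow (k + 1) t
    have h2 : HasDerivAt (fun t : ℝ => (1 - t) ^ (b + 1)) _ t :=
      ((hasDerivAt_id t).const_sub 1).pow (b + 1)
    refine (h1.mul h2).congr_deriv ?_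
    push_cast
    simp only [id]
    ring
  have hI := intervalIntegral.integral_eq_sub_of_hasDerivAt hd
    (Continuous.intervalIntegrable (by fun_prop) _ _)
  rw [intervalIntegral.integral_sub (Continuous.intervalIntegrable (by fun_prop) _ _)
    (Continuous.intervalIntegrable (by fun_prop) _ _), intervalIntegral.integral_const_mul,
    intervalIntegral.integral_const_mul] at hI
  simp at hI
  linarith

lemma beta_val (b : ℕ) : ∀ k : ℕ,
    ((k + b).choose k : ℝ) * ∫ t in (0:ℝ)..1, t ^ k * (1 - t) ^ b = 1 / ((k:ℝ) + b + 1) := by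
  induction b with
  | zero => intro k; simp
  | succ b ih =>
    intro k
    have h1 := ih (k + 1)
    have h2 := beta_rec k b
    have h3 := Nat.choose_succ_right_eq (k + (b + 1)) k
    have h4 : k + (b + 1) - k = b + 1 := by omega
    rw [h4] at h3
    have h3' : ((k + (b+1)).choose (k + 1) : ℝ) * ((k:ℝ) + 1)
        = ((k + (b+1)).choose k : ℝ) * ((b:ℝ) + 1) := by exact_mod_cast h3
    have h5 : k + 1 + b = k + (b + 1) := by ring
    rw [h5] at h1
    push_cast at h1 ⊢
    have hk : ((k:ℝ) + 1) ≠ 0 := by positivity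
    have hb : ((b:ℝ) + 1) ≠ 0 := by positivity
    have e1 : ∫ t in (0:ℝ)..1, t ^ k * (1 - t) ^ (b + 1) =
        ((b:ℝ) + 1) / (k + 1) * ∫ t in (0:ℝ)..1, t ^ (k + 1) * (1 - t) ^ b := by
      field_simp; linarith
    rw [e1]
    have e2 : ((k + (b+1)).choose k : ℝ) * (((b:ℝ) + 1) / (k + 1)) = ((k + (b+1)).choose (k + 1) : ℝ) := by
      field_simp; linarith
    rw [← mul_assoc, e2, h1]
    ring

lemma int_w (n k : ℕ) (h : k ≤ n) : ∫ t in (0:ℝ)..1, w n k t = 1 / ((n:ℝ) + 1) := by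
  obtain ⟨b, rfl⟩ := Nat.exists_eq_add_of_le h
  have := beta_val b k
  unfold w
  simp only [mul_assoc, intervalIntegral.integral_const_mul, Nat.add_sub_cancel_left]
  rw [this]; push_cast; rfl

lemma int_w_pow (n k j : ℕ) : ∫ t in (0:ℝ)..1, w n k t * t ^ (j + 1)
    = ((k:ℝ) + 1) / ((n:ℝ) + 1) * ∫ t in (0:ℝ)..1, w (n + 1) (k + 1) t * t ^ j := by
  rw [← intervalIntegral.integral_const_mul]
  congr 1; ext t
  rw [pow_succ', ← mul_assoc, w_mul]; ring

lemma J0 (n k : ℕ) (h : k ≤ n) : ∫ t in (0:ℝ)..1, w n k t * t ^ 0 = 1 / ((n:ℝ) + 1) := by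
  simpa using int_w n k h

lemma J1 (n k : ℕ) (h : k ≤ n) : ∫ t in (0:ℝ)..1, w n k t * t ^ 1
    = ((k:ℝ) + 1) / (((n:ℝ) + 1) * (n + 2)) := by
  rw [int_w_pow, J0 _ _ (by omega)]; push_cast; field_simp; ring

lemma J2 (n k : ℕ) (h : k ≤ n) : ∫ t in (0:ℝ)..1, w n k t * t ^ 2
    = ((k:ℝ) + 1) * (k + 2) / (((n:ℝ) + 1) * (n + 2) * (n + 3)) := by
  rw [int_w_pow, J1 _ _ (by omega)]; push_cast; field_simp; ring

lemma J3 (n k : ℕ) (h : k ≤ n) : ∫ t in (0:ℝ)..1, w n k t * t ^ 3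
    = ((k:ℝ) + 1) * (k + 2) * (k + 3) / (((n:ℝ) + 1) * (n + 2) * (n + 3) * (n + 4)) := by
  rw [int_w_pow, J2 _ _ (by omega)]; push_cast; field_simp; ring

lemma J4 (n k : ℕ) (h : k ≤ n) : ∫ t in (0:ℝ)..1, w n k t * t ^ 4
    = ((k:ℝ) + 1) * (k + 2) * (k + 3) * (k + 4)
      / (((n:ℝ) + 1) * (n + 2) * (n + 3) * (n + 4) * (n + 5)) := by
  rw [int_w_pow, J3 _ _ (by omega)]; push_cast; field_simp; ring

/-- Integral of the weight against a quartic polynomial. -/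
lemma J_poly (n k : ℕ) (c0 c1 c2 c3 c4 : ℝ) :
    ∫ t in (0:ℝ)..1, w n k t * (c0 + c1 * t + c2 * t ^ 2 + c3 * t ^ 3 + c4 * t ^ 4)
    = c0 * (∫ t in (0:ℝ)..1, w n k t * t ^ 0) + c1 * (∫ t in (0:ℝ)..1, w n k t * t ^ 1)
    + c2 * (∫ t in (0:ℝ)..1, w n k t * t ^ 2) + c3 * (∫ t in (0:ℝ)..1, w n k t * t ^ 3)
    + c4 * (∫ t in (0:ℝ)..1, w n k t * t ^ 4) := by
  have hw := w_cont n k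
  have e : (fun t => w n k t * (c0 + c1 * t + c2 * t ^ 2 + c3 * t ^ 3 + c4 * t ^ 4))
    = fun t => c0 * (w n k t * t ^ 0) + c1 * (w n k t * t ^ 1) + c2 * (w n k t * t ^ 2)
      + c3 * (w n k t * t ^ 3) + c4 * (w n k t * t ^ 4) := by
    ext t; ring
  rw [e]
  repeat rw [intervalIntegral.integral_add (Continuous.intervalIntegrable (by fun_prop) _ _)
    (Continuous.intervalIntegrable (by fun_prop) _ _)]
  simp only [intervalIntegral.integral_const_mul]

/-- Discrete Bernstein sum. -/
noncomputable def S (m : ℕ) (x : ℝ) (g : ℕ → ℝ) : ℝ := ∑ k ∈ Finset.range (m + 1), w m k x * g k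

lemma w_succ_succ (m k : ℕ) (x : ℝ) (hk : k < m) :
    w (m + 1) (k + 1) x = x * w m k x + (1 - x) * w m (k + 1) x := by
  unfold w
  rw [Nat.choose_succ_succ, Nat.add_sub_add_right]
  have : m - k = (m - (k + 1)) + 1 := by omega
  rw [this]
  push_cast; ring

lemma S_succ (m : ℕ) (x : ℝ) (g : ℕ → ℝ) :
    S (m + 1) x g = x * S m x (fun k => g (k + 1)) + (1 - x) * S m x g := by
  unfold S
  rw [Finset.sum_range_succ' _ (m + 1), Finset.sum_range_succ _ m]
  rw [Finset.sum_range_succ (fun k => w m k x * g (k + 1)), Finset.sum_range_succ' (fun k => w m k x * g k)]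
  have e : ∑ k ∈ Finset.range m, w (m + 1) (k + 1) x * g (k + 1)
      = x * (∑ k ∈ Finset.range m, w m k x * g (k + 1))
        + (1 - x) * ∑ k ∈ Finset.range m, w m (k + 1) x * g (k + 1) := by
    rw [Finset.mul_sum, Finset.mul_sum, ← Finset.sum_add_distrib]
    apply Finset.sum_congr rfl
    intro k hk
    rw [w_succ_succ m k x (Finset.mem_range.1 hk)]; ring
  rw [e]
  simp [w]
  ring

lemma S_poly (m : ℕ) (x : ℝ) : ∀ (c0 c1 c2 c3 c4 : ℝ),
    S m x (fun k => c0 + c1 * k + c2 * (k:ℝ) ^ 2 + c3 * (k:ℝ) ^ 3 + c4 * (k:ℝ) ^ 4)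
    = c0 + c1 * (m * x) + c2 * (m * x + m * (m - 1) * x ^ 2)
      + c3 * (m * x + 3 * (m * (m - 1)) * x ^ 2 + m * (m - 1) * (m - 2) * x ^ 3)
      + c4 * (m * x + 7 * (m * (m - 1)) * x ^ 2 + 6 * (m * (m - 1) * (m - 2)) * x ^ 3
        + m * (m - 1) * (m - 2) * (m - 3) * x ^ 4) := by
  induction m with
  | zero => intro c0 c1 c2 c3 c4; simp [S, w]
  | succ m ih =>
    intro c0 c1 c2 c3 c4
    rw [S_succ, ih]
    have e : (fun k : ℕ => c0 + c1 * ((k + 1 : ℕ):ℝ) + c2 * ((k + 1 : ℕ):ℝ) ^ 2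
        + c3 * ((k + 1 : ℕ):ℝ) ^ 3 + c4 * ((k + 1 : ℕ):ℝ) ^ 4)
      = fun k : ℕ => (c0 + c1 + c2 + c3 + c4) + (c1 + 2 * c2 + 3 * c3 + 4 * c4) * (k:ℝ)
        + (c2 + 3 * c3 + 6 * c4) * (k:ℝ) ^ 2 + (c3 + 4 * c4) * (k:ℝ) ^ 3 + c4 * (k:ℝ) ^ 4 := by
      ext k; push_cast; ring
    rw [e, ih]
    push_cast; ring

/-- The positive building blocks. -/
noncomputable def G (e m : ℕ) (x : ℝ) (f : ℝ → ℝ) : ℝ :=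
  S m x (fun k => ((m:ℝ) + 2) * ∫ t in (0:ℝ)..1, w (m + 1) (k + e) t * f t)

lemma G_poly (e m : ℕ) (he : e ≤ 1) (x c0 c1 c2 c3 c4 : ℝ) :
    G e m x (fun t => c0 + c1 * t + c2 * t ^ 2 + c3 * t ^ 3 + c4 * t ^ 4)
    = S m x (fun k => c0 + c1 * (((k:ℝ) + e + 1) / (m + 3))
      + c2 * (((k:ℝ) + e + 1) * (k + e + 2) / ((m + 3) * (m + 4)))
      + c3 * (((k:ℝ) + e + 1) * (k + e + 2) * (k + e + 3) / ((m + 3) * (m + 4) * (m + 5)))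
      + c4 * (((k:ℝ) + e + 1) * (k + e + 2) * (k + e + 3) * (k + e + 4)
        / ((m + 3) * (m + 4) * (m + 5) * (m + 6)))) := by
  unfold G S
  apply Finset.sum_congr rfl
  intro k hk
  beta_reduce
  have hk' : k + e ≤ m + 1 := by have := Finset.mem_range.1 hk; omega
  rw [J_poly, J0 _ _ hk', J1 _ _ hk', J2 _ _ hk', J3 _ _ hk', J4 _ _ hk']
  congr 1
  push_cast
  have h2 : (m:ℝ) + 1 + 1 = m + 2 := by ring
  have h3 : (m:ℝ) + 1 + 2 = m + 3 := by ring
  have h4 : (m:ℝ) + 1 + 3 = m + 4 := by ring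
  have h5 : (m:ℝ) + 1 + 4 = m + 5 := by ring
  have h6 : (m:ℝ) + 1 + 5 = m + 6 := by ring
  rw [h2, h3, h4, h5, h6]
  have p2 : (m:ℝ) + 2 ≠ 0 := by positivity
  field_simp

lemma G_one (e m : ℕ) (he : e ≤ 1) (x : ℝ) : G e m x (fun _ => 1) = 1 := by
  have h := G_poly e m he x 1 0 0 0 0
  have h2 := S_poly m x 1 0 0 0 0
  simp at h h2
  rw [h, h2]

lemma G_lin (e m : ℕ) (he : e ≤ 1) (x : ℝ) :
    G e m x (fun t => t - x) = (1 + e - 3 * x) / (m + 3) := by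
  have h := G_poly e m he x (-x) 1 0 0 0
  have h2 := S_poly m x (-x + (e + 1) / (m + 3)) (1 / (m + 3)) 0 0 0
  have e1 : (fun t : ℝ => -x + 1 * t + 0 * t ^ 2 + 0 * t ^ 3 + 0 * t ^ 4) = fun t => t - x := by
    ext t; ring
  rw [e1] at h
  rw [h]
  convert h2 using 1
  · congr 1; ext k; field_simp; ring
  · field_simp; ring

lemma G_sq (e m : ℕ) (he : e ≤ 1) (x : ℝ) :
    G e m x (fun t => (t - x) ^ 2)
      = (2 * x * (1 - x) * m + 2 + 4 * e - 8 * (1 + e) * x + 12 * x ^ 2) / ((m + 3) * (m + 4)) := by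
  have h := G_poly e m he x (x ^ 2) (-2 * x) 1 0 0
  have h2 := S_poly m x (x ^ 2 - 2 * x * ((e + 1) / (m + 3)) + (e + 1) * (e + 2) / ((m + 3) * (m + 4)))
    (-2 * x / (m + 3) + (2 * e + 3) / ((m + 3) * (m + 4))) (1 / ((m + 3) * (m + 4))) 0 0
  have e1 : (fun t : ℝ => x ^ 2 + (-2 * x) * t + 1 * t ^ 2 + 0 * t ^ 3 + 0 * t ^ 4)
      = fun t => (t - x) ^ 2 := by
    ext t; ring
  rw [e1] at h
  rw [h]
  convert h2 using 1
  · congr 1; ext k; field_simp; ring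
  · interval_cases e
    · push_cast; field_simp; ring
    · push_cast; field_simp; ring

/-- numerator of the fourth moment -/
noncomputable def N4 (e : ℕ) (m x : ℝ) : ℝ :=
  if e = 0 then (24 - 144 * x + 360 * x ^ 2 - 480 * x ^ 3 + 360 * x ^ 4)
    + (72 * x - 372 * x ^ 2 + 672 * x ^ 3 - 372 * x ^ 4) * m
    + (12 * x ^ 2 - 24 * x ^ 3 + 12 * x ^ 4) * m ^ 2
  else (120 - 576 * x + 1080 * x ^ 2 - 960 * x ^ 3 + 360 * x ^ 4)
    + (144 * x - 588 * x ^ 2 + 816 * x ^ 3 - 372 * x ^ 4) * m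
    + (12 * x ^ 2 - 24 * x ^ 3 + 12 * x ^ 4) * m ^ 2

lemma G_four (e m : ℕ) (he : e ≤ 1) (x : ℝ) :
    G e m x (fun t => (t - x) ^ 4)
      = N4 e m x / ((m + 3) * (m + 4) * (m + 5) * (m + 6)) := by
  have h := G_poly e m he x (x ^ 4) (-4 * x ^ 3) (6 * x ^ 2) (-4 * x) 1
  have e1 : (fun t : ℝ => x ^ 4 + (-4 * x ^ 3) * t + (6 * x ^ 2) * t ^ 2 + (-4 * x) * t ^ 3 + 1 * t ^ 4)
      = fun t => (t - x) ^ 4 := by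
    ext t; ring
  rw [e1] at h
  rw [h]
  set E : ℝ := (e : ℝ) with hE
  set M : ℝ := (m : ℝ) with hM
  have h2 := S_poly m x
    (x ^ 4 - 4 * x ^ 3 * ((E + 1) / (M + 3)) + 6 * x ^ 2 * ((E + 1) * (E + 2) / ((M + 3) * (M + 4)))
      - 4 * x * ((E + 1) * (E + 2) * (E + 3) / ((M + 3) * (M + 4) * (M + 5)))
      + (E + 1) * (E + 2) * (E + 3) * (E + 4) / ((M + 3) * (M + 4) * (M + 5) * (M + 6)))
    (- 4 * x ^ 3 * (1 / (M + 3)) + 6 * x ^ 2 * ((2 * E + 3) / ((M + 3) * (M + 4)))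
      - 4 * x * ((3 * E ^ 2 + 12 * E + 11) / ((M + 3) * (M + 4) * (M + 5)))
      + (4 * E ^ 3 + 30 * E ^ 2 + 70 * E + 50) / ((M + 3) * (M + 4) * (M + 5) * (M + 6)))
    (6 * x ^ 2 * (1 / ((M + 3) * (M + 4)))
      - 4 * x * ((3 * E + 6) / ((M + 3) * (M + 4) * (M + 5)))
      + (6 * E ^ 2 + 30 * E + 35) / ((M + 3) * (M + 4) * (M + 5) * (M + 6)))
    (- 4 * x * (1 / ((M + 3) * (M + 4) * (M + 5)))
      + (4 * E + 10) / ((M + 3) * (M + 4) * (M + 5) * (M + 6)))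
    (1 / ((M + 3) * (M + 4) * (M + 5) * (M + 6)))
  have p0 : 0 ≤ M := by positivity
  have p3 : M + 3 ≠ 0 := by positivity
  have p4 : M + 4 ≠ 0 := by positivity
  have p5 : M + 5 ≠ 0 := by positivity
  have p6 : M + 6 ≠ 0 := by positivity
  convert h2 using 1
  · congr 1; ext k; field_simp; ring
  · rcases (by omega : e = 0 ∨ e = 1) with h0 | h0
    · have hE' : E = 0 := by rw [hE, h0]; simp
      rw [hE', N4, if_pos h0]; field_simp; ring
    · have hE' : E = 1 := by rw [hE, h0]; simp
      rw [hE', N4, if_neg (by omega)]; field_simp; ring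

end DMV
namespace DMV

lemma G_sq_le (e m : ℕ) (he : e ≤ 1) (x : ℝ) (hx : x ∈ Set.Icc (0:ℝ) 1) :
    G e m x (fun t => (t - x) ^ 2) ≤ 34 / ((m:ℝ) + 1) := by
  rw [G_sq e m he]
  obtain ⟨h0, h1⟩ := hx
  have hm : (0:ℝ) ≤ m := by positivity
  have he' : (e:ℝ) ≤ 1 := by exact_mod_cast he
  have he0 : (0:ℝ) ≤ e := by positivity
  have hx2 : x ^ 2 ≤ 1 := pow_le_one₀ h0 h1
  have hex : 0 ≤ (1 + (e:ℝ)) * x := by positivity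
  have hxx : x * (1 - x) ≤ 1 := by nlinarith
  have hxm : x * (1 - x) * m ≤ 1 * m := mul_le_mul_of_nonneg_right hxx hm
  rw [div_le_div_iff₀ (by positivity) (by positivity)]
  have hnum : 2 * x * (1 - x) * m + 2 + 4 * e - 8 * (1 + e) * x + 12 * x ^ 2 ≤ 34 * ((m:ℝ) + 1) := by
    nlinarith
  calc _ ≤ 34 * ((m:ℝ) + 1) * (m + 1) := mul_le_mul_of_nonneg_right hnum (by positivity)
    _ ≤ _ := by nlinarith

lemma N4_le (e : ℕ) (m x : ℝ) (hm : 0 ≤ m) (hx : x ∈ Set.Icc (0:ℝ) 1) :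
    N4 e m x ≤ 1560 * (m + 1) ^ 2 := by
  obtain ⟨h0, h1⟩ := hx
  have a2 : 0 ≤ x ^ 2 := by positivity
  have a3 : 0 ≤ x ^ 3 := by positivity
  have a4 : 0 ≤ x ^ 4 := by positivity
  have b2 : x ^ 2 ≤ 1 := pow_le_one₀ h0 h1
  have b3 : x ^ 3 ≤ 1 := pow_le_one₀ h0 h1
  have b4 : x ^ 4 ≤ 1 := pow_le_one₀ h0 h1
  have hm2 : 0 ≤ m ^ 2 := by positivity
  unfold N4
  have c2 : (12 * x ^ 2 - 24 * x ^ 3 + 12 * x ^ 4) * m ^ 2 ≤ 24 * m ^ 2 :=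
    mul_le_mul_of_nonneg_right (by linarith) hm2
  split_ifs
  · have c1 : (72 * x - 372 * x ^ 2 + 672 * x ^ 3 - 372 * x ^ 4) * m ≤ 960 * m :=
      mul_le_mul_of_nonneg_right (by linarith) hm
    nlinarith
  · have c1 : (144 * x - 588 * x ^ 2 + 816 * x ^ 3 - 372 * x ^ 4) * m ≤ 960 * m :=
      mul_le_mul_of_nonneg_right (by linarith) hm
    nlinarith

lemma G_four_le (e m : ℕ) (he : e ≤ 1) (x : ℝ) (hx : x ∈ Set.Icc (0:ℝ) 1) :
    G e m x (fun t => (t - x) ^ 4) ≤ 1560 / ((m:ℝ) + 1) ^ 2 := by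
  rw [G_four e m he]
  have hm : (0:ℝ) ≤ m := by positivity
  have h := N4_le e m x hm hx
  rw [div_le_div_iff₀ (by positivity) (by positivity)]
  have h2 : ((m:ℝ) + 1) ^ 2 * (m + 1) ^ 2 ≤ ((m:ℝ) + 3) * (m + 4) * (m + 5) * (m + 6) := by
    have e1 : ((m:ℝ) + 1) ^ 2 * (m + 1) ^ 2 = (m + 1) * (m + 1) * (m + 1) * (m + 1) := by ring
    rw [e1]; gcongr <;> norm_num
  calc _ ≤ 1560 * ((m:ℝ) + 1) ^ 2 * (m + 1) ^ 2 := mul_le_mul_of_nonneg_right h (by positivity)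
    _ ≤ _ := by rw [mul_assoc]; exact mul_le_mul_of_nonneg_left h2 (by norm_num)

lemma wf_int (n k : ℕ) {f : ℝ → ℝ} (hf : ContinuousOn f (Set.Icc 0 1)) :
    IntervalIntegrable (fun t => w n k t * f t) MeasureTheory.volume 0 1 := by
  apply ContinuousOn.intervalIntegrable
  rw [Set.uIcc_of_le zero_le_one]
  exact (w_cont n k).continuousOn.mul hf

lemma G_add (e m : ℕ) (x : ℝ) {f g : ℝ → ℝ} (hf : ContinuousOn f (Set.Icc 0 1))
    (hg : ContinuousOn g (Set.Icc 0 1)) :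
    G e m x (fun t => f t + g t) = G e m x f + G e m x g := by
  unfold G S
  rw [← Finset.sum_add_distrib]
  apply Finset.sum_congr rfl
  intro k _
  beta_reduce
  rw [← mul_add, ← mul_add, ← intervalIntegral.integral_add (wf_int _ _ hf) (wf_int _ _ hg)]
  simp only [mul_add]

lemma G_smul (e m : ℕ) (x c : ℝ) (f : ℝ → ℝ) :
    G e m x (fun t => c * f t) = c * G e m x f := by
  unfold G S
  rw [Finset.mul_sum]
  apply Finset.sum_congr rfl
  intro k _
  beta_reduce
  have : (fun t => w (m + 1) (k + e) t * (c * f t)) = fun t => c * (w (m + 1) (k + e) t * f t) := by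
    ext t; ring
  rw [this, intervalIntegral.integral_const_mul]; ring

lemma G_mono (e m : ℕ) (x : ℝ) (hx : x ∈ Set.Icc (0:ℝ) 1) {f g : ℝ → ℝ}
    (hf : ContinuousOn f (Set.Icc 0 1)) (hg : ContinuousOn g (Set.Icc 0 1))
    (h : ∀ t ∈ Set.Icc (0:ℝ) 1, f t ≤ g t) : G e m x f ≤ G e m x g := by
  unfold G S
  apply Finset.sum_le_sum
  intro k _
  apply mul_le_mul_of_nonneg_left _ (w_nonneg _ _ hx)
  apply mul_le_mul_of_nonneg_left _ (by positivity)
  apply intervalIntegral.integral_mono_on zero_le_one (wf_int _ _ hf) (wf_int _ _ hg)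
  intro t ht
  exact mul_le_mul_of_nonneg_left (h t ht) (w_nonneg _ _ ht)

lemma G_abs (e m : ℕ) (x : ℝ) (hx : x ∈ Set.Icc (0:ℝ) 1) {f g : ℝ → ℝ}
    (hf : ContinuousOn f (Set.Icc 0 1)) (hg : ContinuousOn g (Set.Icc 0 1))
    (h : ∀ t ∈ Set.Icc (0:ℝ) 1, |f t| ≤ g t) : |G e m x f| ≤ G e m x g := by
  rw [abs_le]
  constructor
  · have h1 := G_mono e m x hx (f := fun t => (-1) * g t) (g := f) (by fun_prop) hf (by
      intro t ht; have := (abs_le.1 (h t ht)).1; linarith)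
    rw [G_smul] at h1; linarith
  · exact G_mono e m x hx hf hg (fun t ht => (abs_le.1 (h t ht)).2)

lemma bern_nat (n k : ℕ) (x : ℝ) : bern n (k:ℤ) x = w n k x := by
  unfold bern w
  by_cases h : k ≤ n
  · rw [if_pos ⟨by positivity, by exact_mod_cast h⟩]; simp
  · rw [if_neg (by intro h2; exact h (by exact_mod_cast h2.2)), Nat.choose_eq_zero_of_lt (by omega)]
    simp

lemma DM1_eq (a0 a1 : ℕ → ℝ) (m : ℕ) (f : ℝ → ℝ) (x : ℝ) :
    DM1 a0 a1 (m + 1) f x = (a1 (m + 1) * x + a0 (m + 1)) * G 0 m x f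
      + (a1 (m + 1) * (1 - x) + a0 (m + 1)) * G 1 m x f := by
  set α := a1 (m + 1) * x + a0 (m + 1)
  set β := a1 (m + 1) * (1 - x) + a0 (m + 1)
  set I : ℕ → ℝ := fun k => ∫ t in (0:ℝ)..1, w (m + 1) k t * f t with hI
  have h0 : DM1 a0 a1 (m + 1) f x = ((m:ℝ) + 2) * ∑ k ∈ Finset.range (m + 2),
      (α * (w m k x * I k) + β * (bern m ((k:ℤ) - 1) x * I k)) := by
    unfold DM1 pM1
    simp only [bern_nat, Nat.add_sub_cancel]
    push_cast
    congr 1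
    · ring
    · apply Finset.sum_congr rfl
      intro k _
      simp only [hI]; ring
  have h1 : ∑ k ∈ Finset.range (m + 2), w m k x * I k
      = ∑ k ∈ Finset.range (m + 1), w m k x * I k := by
    rw [Finset.sum_range_succ]
    simp [w]
  have h2 : ∑ k ∈ Finset.range (m + 2), bern m ((k:ℤ) - 1) x * I k
      = ∑ k ∈ Finset.range (m + 1), w m k x * I (k + 1) := by
    rw [Finset.sum_range_succ']
    have e1 : bern m (((0:ℕ):ℤ) - 1) x = 0 := by simp [bern]
    rw [e1, zero_mul, add_zero]
    apply Finset.sum_congr rfl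
    intro k _
    have e2 : (((k + 1 : ℕ):ℤ) - 1) = (k:ℤ) := by push_cast; ring
    rw [e2, bern_nat]
  rw [h0, Finset.sum_add_distrib, ← Finset.mul_sum, ← Finset.mul_sum, h1, h2]
  have g0 : G 0 m x f = ((m:ℝ) + 2) * ∑ k ∈ Finset.range (m + 1), w m k x * I k := by
    unfold G S
    rw [Finset.mul_sum]
    apply Finset.sum_congr rfl
    intro k _
    simp only [hI, add_zero]; ring
  have g1 : G 1 m x f = ((m:ℝ) + 2) * ∑ k ∈ Finset.range (m + 1), w m k x * I (k + 1) := by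
    unfold G S
    rw [Finset.mul_sum]
    apply Finset.sum_congr rfl
    intro k _
    simp only [hI]; ring
  rw [g0, g1]; ring

end DMV
namespace DMV

lemma G_expand (e m : ℕ) (he : e ≤ 1) (x p q : ℝ) {f : ℝ → ℝ} (hf : ContinuousOn f (Set.Icc 0 1)) :
    G e m x f = f x + p * G e m x (fun t => t - x) + q / 2 * G e m x (fun t => (t - x) ^ 2)
      + G e m x (fun t => f t - f x - p * (t - x) - q / 2 * (t - x) ^ 2) := by
  have e1 : f = fun t => ((f x * 1 + p * (t - x)) + q / 2 * (t - x) ^ 2)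
      + (f t - f x - p * (t - x) - q / 2 * (t - x) ^ 2) := by ext t; ring
  have key : G e m x (fun t => ((f x * 1 + p * (t - x)) + q / 2 * (t - x) ^ 2)
      + (f t - f x - p * (t - x) - q / 2 * (t - x) ^ 2)) = _ :=
    G_add e m x (f := fun t => ((f x * 1 + p * (t - x)) + q / 2 * (t - x) ^ 2))
      (g := fun t => f t - f x - p * (t - x) - q / 2 * (t - x) ^ 2) (by fun_prop) (by fun_prop)
  rw [G_add e m x (f := fun t => f x * 1 + p * (t - x)) (g := fun t => q / 2 * (t - x) ^ 2)
    (by fun_prop) (by fun_prop),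
    G_add e m x (f := fun t => f x * 1) (g := fun t => p * (t - x))
    (by fun_prop) (by fun_prop), G_smul, G_smul, G_smul, G_one e m he, mul_one] at key
  rw [← key]
  congr 1
  ext t; ring

/-- Remainder estimate for one building block. -/
lemma G_rem (e m : ℕ) (he : e ≤ 1) (x ε C : ℝ) (hε : 0 ≤ ε) (hC : 0 ≤ C)
    (hx : x ∈ Set.Icc (0:ℝ) 1) {R : ℝ → ℝ} (hR : ContinuousOn R (Set.Icc 0 1))
    (h : ∀ t ∈ Set.Icc (0:ℝ) 1, |R t| ≤ ε * (t - x) ^ 2 + C * (t - x) ^ 4) :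
    ((m:ℝ) + 1) * |G e m x R| ≤ 34 * ε + 1560 * C / (m + 1) := by
  have h1 := G_abs e m x hx hR (g := fun t => ε * (t - x) ^ 2 + C * (t - x) ^ 4) (by fun_prop) h
  rw [G_add e m x (f := fun t => ε * (t - x) ^ 2) (g := fun t => C * (t - x) ^ 4)
    (by fun_prop) (by fun_prop), G_smul, G_smul] at h1
  have h2 := mul_le_mul_of_nonneg_left (G_sq_le e m he x hx) hε
  have h3 := mul_le_mul_of_nonneg_left (G_four_le e m he x hx) hC
  have h4 : |G e m x R| ≤ ε * (34 / ((m:ℝ) + 1)) + C * (1560 / ((m:ℝ) + 1) ^ 2) := by linarith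
  calc _ ≤ ((m:ℝ) + 1) * (ε * (34 / ((m:ℝ) + 1)) + C * (1560 / ((m:ℝ) + 1) ^ 2)) :=
        mul_le_mul_of_nonneg_left h4 (by positivity)
    _ = _ := by field_simp

/-- Uniform second-order Taylor estimate. -/
lemma taylor (f f' f'' : ℝ → ℝ)
    (hf' : ∀ y ∈ Set.Icc (0:ℝ) 1, HasDerivWithinAt f (f' y) (Set.Icc 0 1) y)
    (ε δ x : ℝ) (hε : 0 ≤ ε) (hx : x ∈ Set.Icc (0:ℝ) 1)
    (h : ∀ y ∈ Set.Icc (0:ℝ) 1, |y - x| < δ → |f' y - f' x - f'' x * (y - x)| ≤ ε * |y - x|)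
    (t : ℝ) (ht : t ∈ Set.Icc (0:ℝ) 1) (htx : |t - x| < δ) :
    |f t - f x - f' x * (t - x) - f'' x / 2 * (t - x) ^ 2| ≤ ε * (t - x) ^ 2 := by
  have hsub : Set.uIcc x t ⊆ Set.Icc 0 1 := by
    intro y hy
    rw [Set.mem_uIcc] at hy
    rcases hy with hy | hy
    · exact ⟨hx.1.trans hy.1, hy.2.trans ht.2⟩
    · exact ⟨ht.1.trans hy.1, hy.2.trans hx.2⟩
  have hmv := Convex.norm_image_sub_le_of_norm_hasDerivWithin_le (𝕜 := ℝ)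
    (f := fun y => f y - f x - f' x * (y - x) - f'' x / 2 * (y - x) ^ 2)
    (f' := fun y => f' y - f' x - f'' x * (y - x)) (s := Set.uIcc x t) (C := ε * |t - x|)
    (x := x) (y := t) ?_ ?_ (convex_uIcc x t) Set.left_mem_uIcc Set.right_mem_uIcc
  · simp only [Real.norm_eq_abs, sub_self, mul_zero, zero_pow two_ne_zero, sub_zero] at hmv
    have : ε * |t - x| * |t - x| = ε * (t - x) ^ 2 := by
      rw [mul_assoc, abs_mul_abs_self]; ring
    rw [this] at hmv
    exact hmv
  · intro y hy
    have d0 := (hf' y (hsub hy)).mono hsub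
    have d1 : HasDerivWithinAt (fun y => f' x * (y - x)) (f' x * 1) (Set.uIcc x t) y :=
      ((hasDerivWithinAt_id y _).sub_const x).const_mul _
    have d2 : HasDerivWithinAt (fun y => f'' x / 2 * (y - x) ^ 2)
        (f'' x / 2 * (((2:ℕ):ℝ) * (y - x) ^ (2 - 1) * 1)) (Set.uIcc x t) y :=
      (((hasDerivWithinAt_id y _).sub_const x).pow 2).const_mul _
    refine (((d0.sub_const (f x)).sub d1).sub d2).congr_deriv ?_
    push_cast; ring
  · intro y hy
    have hyx : |y - x| ≤ |t - x| := by
      have := Set.abs_sub_left_of_mem_uIcc hy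
      exact this
    rw [Real.norm_eq_abs]
    exact (h y (hsub hy) (hyx.trans_lt htx)).trans (mul_le_mul_of_nonneg_left hyx hε)

lemma E2_bound (m : ℕ) (x B c : ℝ) (hx0 : 0 ≤ x) (hx1 : x ≤ 1) (hB0 : 0 < B)
    (hcB : |c| ≤ 22 + 12 * B) :
    |(-(12 * (x * (1 - x)) * ((m:ℝ) + 2)) + c * (m + 1)) / (2 * (m + 3) * (m + 4))|
      ≤ (25 + 12 * B) / (m + 1) := by
  have hmp : (0:ℝ) ≤ m := by positivity
  have hxx0 : 0 ≤ x * (1 - x) := mul_nonneg hx0 (by linarith)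
  have hxx1 : x * (1 - x) ≤ 1 / 4 := by nlinarith [sq_nonneg (x - 1 / 2)]
  rw [abs_div, abs_of_pos (by positivity : (0:ℝ) < 2 * (m + 3) * (m + 4)),
    div_le_div_iff₀ (by positivity) (by positivity)]
  have j1 : |-(12 * (x * (1 - x)) * ((m:ℝ) + 2)) + c * (m + 1)|
      ≤ 3 * (m + 2) + (22 + 12 * B) * (m + 1) := by
    refine (abs_add_le _ _).trans ?_
    rw [abs_neg, abs_of_nonneg (by positivity), abs_mul c,
      abs_of_nonneg (by positivity : (0:ℝ) ≤ m + 1)]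
    have := mul_le_mul_of_nonneg_right hcB (by positivity : (0:ℝ) ≤ m + 1)
    have := mul_le_mul_of_nonneg_right hxx1 (by positivity : (0:ℝ) ≤ m + 2)
    linarith
  have hQ : 0 ≤ 25 + 12 * B := by positivity
  calc _ ≤ (3 * (m + 2) + (22 + 12 * B) * (m + 1)) * ((m:ℝ) + 1) :=
        mul_le_mul_of_nonneg_right j1 (by positivity)
    _ ≤ ((25 + 12 * B) * (m + 2)) * (m + 3) := by
      apply mul_le_mul _ (by linarith) (by positivity) (by positivity)
      linarith
    _ = (25 + 12 * B) * ((m + 2) * (m + 3)) := by ring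
    _ ≤ _ := mul_le_mul_of_nonneg_left (by nlinarith) hQ

set_option maxHeartbeats 1000000 in
lemma core (a0 a1 : ℕ → ℝ) (l0 l1 : ℝ)
    (hl0 : Tendsto a0 atTop (𝓝 l0)) (hl1 : Tendsto a1 atTop (𝓝 l1))
    (hA : ∀ n, 2 * a0 n + a1 n = 1)
    (f f' f'' : ℝ → ℝ)
    (hf : ContinuousOn f (Set.Icc 0 1))
    (hf' : ∀ y ∈ Set.Icc (0:ℝ) 1, HasDerivWithinAt f (f' y) (Set.Icc 0 1) y)
    (T : Set ℝ) (hT : T ⊆ Set.Icc 0 1) (M : ℝ) (hM : ∀ x ∈ T, |f' x| ≤ M ∧ |f'' x| ≤ M)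
    (hM0 : 0 ≤ M)
    (H : ∀ ε > 0, ∃ δ > 0, ∀ x ∈ T, ∀ y ∈ Set.Icc (0:ℝ) 1, |y - x| < δ →
      |f' y - f' x - f'' x * (y - x)| ≤ ε * |y - x|) :
    TendstoUniformlyOn (fun (n : ℕ) x => (n : ℝ) * (DM1 a0 a1 n f x - f x))
        (fun x => (1 - 2 * x) * (2 * l1 + 3 * l0) * f' x
          + x * (1 - x) * (2 * l0 + l1) * f'' x) atTop T := by
  have hl : 2 * l0 + l1 = 1 := by
    have h1 : Tendsto (fun n => 2 * a0 n + a1 n) atTop (𝓝 (2 * l0 + l1)) :=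
      (hl0.const_mul 2).add hl1
    simp only [hA] at h1
    exact tendsto_nhds_unique h1 tendsto_const_nhds |>.symm ▸ rfl
  obtain ⟨F, hF⟩ := isCompact_Icc.exists_bound_of_continuousOn hf
  have hF0 : 0 ≤ F := (norm_nonneg _).trans (hF 0 (by simp))
  rw [Metric.tendstoUniformlyOn_iff]
  intro η hη
  set B : ℝ := 4 + 3 * |l0| with hB
  have hB0 : 0 < B := by positivity
  set ε : ℝ := η / (4 * 34 * B) with hεd
  have hε : 0 < ε := by positivity
  obtain ⟨δ, hδ, hH⟩ := H ε hε
  set C : ℝ := (2 * F + 2 * M) / δ ^ 4 with hCd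
  have hC : 0 ≤ C := by positivity
  -- remainder estimate
  have hR : ∀ x ∈ T, ∀ t ∈ Set.Icc (0:ℝ) 1,
      |f t - f x - f' x * (t - x) - f'' x / 2 * (t - x) ^ 2|
        ≤ ε * (t - x) ^ 2 + C * (t - x) ^ 4 := by
    intro x hxT t ht
    have hx := hT hxT
    by_cases htx : |t - x| < δ
    · have := taylor f f' f'' hf' ε δ x hε.le hx (hH x hxT) t ht htx
      have : 0 ≤ C * (t - x) ^ 4 := by positivity
      linarith
    · push Not at htx
      have h4 : δ ^ 4 ≤ (t - x) ^ 4 := by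
        have := pow_le_pow_left₀ hδ.le htx 4
        rwa [Even.pow_abs (by decide)] at this
      have h5 : 2 * F + 2 * M ≤ C * (t - x) ^ 4 := by
        calc 2 * F + 2 * M = C * δ ^ 4 := by rw [hCd]; field_simp
          _ ≤ _ := mul_le_mul_of_nonneg_left h4 hC
      have h6 : |t - x| ≤ 1 := by
        rw [abs_le]; constructor <;> linarith [hx.1, hx.2, ht.1, ht.2]
      have h7 : |f' x * (t - x)| ≤ M := by
        rw [abs_mul]
        calc _ ≤ M * 1 := mul_le_mul (hM x hxT).1 h6 (abs_nonneg _) hM0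
          _ = M := mul_one M
      have h8 : |f'' x / 2 * (t - x) ^ 2| ≤ M := by
        rw [abs_mul, abs_pow, abs_div]
        have : |t - x| ^ 2 ≤ 1 := pow_le_one₀ (abs_nonneg _) h6
        calc _ ≤ M * 1 := mul_le_mul (by
                have := (hM x hxT).2
                rw [abs_two]; linarith [abs_nonneg (f'' x)]) this (by positivity) hM0
          _ = M := mul_one M
      have h9 := hF t ht
      have h10 := hF x hx
      rw [Real.norm_eq_abs] at h9 h10
      have h11 : 0 ≤ ε * (t - x) ^ 2 := by positivity
      rw [abs_le] at h7 h8 h9 h10 ⊢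
      constructor <;> linarith [h7.1, h7.2, h8.1, h8.2, h9.1, h9.2, h10.1, h10.2]
  -- convergence of scalar errors
  set K : ℝ := M * (25 + 12 * B) + 2 * B * (1560 * C) with hK
  have hlim : Tendsto (fun n : ℕ => M * |(n:ℝ) / (n + 2) * (2 - a0 n) - (2 - l0)| + K / n)
      atTop (𝓝 0) := by
    have t1 : Tendsto (fun n : ℕ => (n:ℝ) / (n + 2)) atTop (𝓝 1) :=
      tendsto_natCast_div_add_atTop 2
    have t2 : Tendsto (fun n : ℕ => (n:ℝ) / (n + 2) * (2 - a0 n) - (2 - l0)) atTop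
        (𝓝 (1 * (2 - l0) - (2 - l0))) := (t1.mul (hl0.const_sub 2)).sub_const _
    have t3 := (t2.abs.const_mul M).add (tendsto_const_div_atTop_nhds_zero_nat K)
    simpa using t3
  have ev1 : ∀ᶠ n : ℕ in atTop, M * |(n:ℝ) / (n + 2) * (2 - a0 n) - (2 - l0)| + K / n < η / 2 :=
    hlim.eventually (gt_mem_nhds (by positivity))
  have ev2 : ∀ᶠ n : ℕ in atTop, |a0 n| < |l0| + 1 :=
    hl0.abs.eventually (gt_mem_nhds (by linarith))
  filter_upwards [ev1, ev2, eventually_ge_atTop 1] with n h1 h2 hn x hxT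
  obtain ⟨m, rfl⟩ : ∃ m, n = m + 1 := ⟨n - 1, by omega⟩
  have hx := hT hxT
  have hx0 := hx.1
  have hx1 := hx.2
  rw [dist_comm, Real.dist_eq, DM1_eq, G_expand 0 m (by norm_num) x (f' x) (f'' x) hf,
    G_expand 1 m le_rfl x (f' x) (f'' x) hf, G_lin 0 m (by norm_num), G_lin 1 m le_rfl,
    G_sq 0 m (by norm_num), G_sq 1 m le_rfl]
  have r0 := G_rem 0 m (by norm_num) x ε C hε.le hC hx
    (R := fun t => f t - f x - f' x * (t - x) - f'' x / 2 * (t - x) ^ 2) (by fun_prop) (hR x hxT)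
  have r1 := G_rem 1 m le_rfl x ε C hε.le hC hx
    (R := fun t => f t - f x - f' x * (t - x) - f'' x / 2 * (t - x) ^ 2) (by fun_prop) (hR x hxT)
  set R0 := G 0 m x (fun t => f t - f x - f' x * (t - x) - f'' x / 2 * (t - x) ^ 2)
  set R1 := G 1 m x (fun t => f t - f x - f' x * (t - x) - f'' x / 2 * (t - x) ^ 2)
  have hA' := hA (m + 1)
  set A0 := a0 (m + 1) with hA0
  set A1 := a1 (m + 1) with hA1
  have hA1' : A1 = 1 - 2 * A0 := by linarith
  have hl1' : l1 = 1 - 2 * l0 := by linarith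
  push_cast at h1 ⊢
  set α := A1 * x + A0 with hα
  set β := A1 * (1 - x) + A0 with hβ
  have hαβ : α = 1 - β := by rw [hα, hβ, hA1']; ring
  have hβ2 : β = (1 - 2 * A0) * (1 - x) + A0 := by rw [hβ, hA1']
  have habs := abs_lt.1 h2
  have hAx : |(1 - 2 * A0) * (1 - x)| ≤ 1 + 2 * (|l0| + 1) := by
    rw [abs_mul]
    have i1 : |1 - 2 * A0| ≤ 1 + 2 * (|l0| + 1) := by
      rw [abs_le]; constructor <;> linarith [habs.1, habs.2]
    have i2 : |1 - x| ≤ 1 := by rw [abs_le]; constructor <;> linarith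
    calc _ ≤ (1 + 2 * (|l0| + 1)) * 1 := mul_le_mul i1 i2 (abs_nonneg _) (by positivity)
      _ = _ := mul_one _
  have hAx' : |(1 - 2 * A0) * x| ≤ 1 + 2 * (|l0| + 1) := by
    rw [abs_mul]
    have i1 : |1 - 2 * A0| ≤ 1 + 2 * (|l0| + 1) := by
      rw [abs_le]; constructor <;> linarith [habs.1, habs.2]
    have i2 : |x| ≤ 1 := by rw [abs_le]; constructor <;> linarith
    calc _ ≤ (1 + 2 * (|l0| + 1)) * 1 := mul_le_mul i1 i2 (abs_nonneg _) (by positivity)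
      _ = _ := mul_one _
  have hβB : |β| ≤ B := by
    rw [hβ2]
    have := abs_add_le ((1 - 2 * A0) * (1 - x)) A0
    linarith
  have hαB : |α| ≤ B := by
    rw [hα, hA1']
    have := abs_add_le ((1 - 2 * A0) * x) A0
    linarith
  have hmp : (0:ℝ) ≤ m := by positivity
  set c : ℝ := 2 - 8 * x + 12 * x ^ 2 + β * (4 - 8 * x) with hc
  have hcB : |c| ≤ 22 + 12 * B := by
    have i1 : |β * (4 - 8 * x)| ≤ B * 4 := by
      rw [abs_mul]
      exact mul_le_mul hβB (by rw [abs_le]; constructor <;> linarith) (abs_nonneg _) hB0.le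
    have hx2 : x ^ 2 ≤ 1 := pow_le_one₀ hx0 hx1
    have hx2' : 0 ≤ x ^ 2 := by positivity
    rw [abs_le] at i1 ⊢
    constructor <;> linarith [i1.1, i1.2]
  set E2 : ℝ := (-(12 * (x * (1 - x)) * (m + 2)) + c * (m + 1)) / (2 * (m + 3) * (m + 4)) with hE2
  have hE2b : |E2| ≤ (25 + 12 * B) / (m + 1) := by
    rw [hE2]; exact E2_bound m x B c hx0 hx1 hB0 hcB
  have main : ((m:ℝ) + 1) * (α * (f x + f' x * ((1 + ((0:ℕ):ℝ) - 3 * x) / (m + 3))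
        + f'' x / 2 * ((2 * x * (1 - x) * m + 2 + 4 * ((0:ℕ):ℝ) - 8 * (1 + ((0:ℕ):ℝ)) * x + 12 * x ^ 2) / ((m + 3) * (m + 4))) + R0)
      + β * (f x + f' x * ((1 + ((1:ℕ):ℝ) - 3 * x) / (m + 3))
        + f'' x / 2 * ((2 * x * (1 - x) * m + 2 + 4 * ((1:ℕ):ℝ) - 8 * (1 + ((1:ℕ):ℝ)) * x + 12 * x ^ 2) / ((m + 3) * (m + 4))) + R1) - f x)
      - ((1 - 2 * x) * (2 * l1 + 3 * l0) * f' x + x * (1 - x) * (2 * l0 + l1) * f'' x)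
      = f' x * ((1 - 2 * x) * (((m:ℝ) + 1) / (m + 1 + 2) * (2 - A0) - (2 - l0))) + f'' x * E2
        + α * ((m + 1) * R0) + β * ((m + 1) * R1) := by
    have k1 : (m:ℝ) + 1 + 2 = m + 3 := by ring
    rw [hE2, hl, hl1', hαβ, hc, k1]
    push_cast
    have k2 : β = 2 - x - A0 - (1 - 2 * A0) * x - 1 + x := by rw [hβ2]; ring
    rw [k2]
    field_simp
    ring
  push_cast at main
  rw [main]
  have s1 : |f' x * ((1 - 2 * x) * (((m:ℝ) + 1) / (m + 1 + 2) * (2 - A0) - (2 - l0)))|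
      ≤ M * |((m:ℝ) + 1) / (m + 1 + 2) * (2 - A0) - (2 - l0)| := by
    rw [abs_mul, abs_mul]
    have : |1 - 2 * x| ≤ 1 := by rw [abs_le]; constructor <;> linarith
    apply mul_le_mul (hM x hxT).1 _ (by positivity) hM0
    exact mul_le_of_le_one_left (abs_nonneg _) this
  have s2 : |f'' x * E2| ≤ M * ((25 + 12 * B) / (m + 1)) := by
    rw [abs_mul]; exact mul_le_mul (hM x hxT).2 hE2b (abs_nonneg _) hM0
  have s3 : |α * ((m + 1) * R0)| ≤ B * (34 * ε + 1560 * C / (m + 1)) := by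
    rw [abs_mul, abs_mul, abs_of_nonneg (by positivity : (0:ℝ) ≤ m + 1)]
    exact mul_le_mul hαB r0 (by positivity) hB0.le
  have s4 : |β * ((m + 1) * R1)| ≤ B * (34 * ε + 1560 * C / (m + 1)) := by
    rw [abs_mul, abs_mul, abs_of_nonneg (by positivity : (0:ℝ) ≤ m + 1)]
    exact mul_le_mul hβB r1 (by positivity) hB0.le
  have s5 : 2 * (B * (34 * ε)) = η / 2 := by rw [hεd]; field_simp; norm_num
  have s6 : K / ((m:ℝ) + 1) = M * ((25 + 12 * B) / (m + 1)) + 2 * (B * (1560 * C / (m + 1))) := by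
    rw [hK]; ring
  refine (abs_add_le _ _).trans_lt ?_
  refine (add_le_add_left (abs_add_three _ _ _) _).trans_lt ?_
  rw [mul_add] at s3 s4
  linarith

end DMV

theorem DM1_voronovskaja_nonpositive_case (a0 a1 : ℕ → ℝ) (l0 l1 : ℝ)
    (hl0 : Tendsto a0 atTop (𝓝 l0)) (hl1 : Tendsto a1 atTop (𝓝 l1))
    (hA : ∀ n, 2 * a0 n + a1 n = 1)
    (hY2 : ∀ n, a0 n < 0 ∨ a1 n + a0 n < 0)
    (f f' f'' : ℝ → ℝ)
    (hf : ContinuousOn f (Set.Icc 0 1))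
    (hf' : ∀ y ∈ Set.Icc (0:ℝ) 1, HasDerivWithinAt f (f' y) (Set.Icc 0 1) y) :
    (∀ x ∈ Set.Icc (0:ℝ) 1, HasDerivWithinAt f' (f'' x) (Set.Icc 0 1) x →
      Tendsto (fun (n : ℕ) => (n : ℝ) * (DM1 a0 a1 n f x - f x)) atTop
        (𝓝 ((1 - 2 * x) * (2 * l1 + 3 * l0) * f' x
          + x * (1 - x) * (2 * l0 + l1) * f'' x))) ∧
    ((∀ x ∈ Set.Icc (0:ℝ) 1, HasDerivWithinAt f' (f'' x) (Set.Icc 0 1) x) →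
      ContinuousOn f'' (Set.Icc 0 1) →
      TendstoUniformlyOn (fun (n : ℕ) x => (n : ℝ) * (DM1 a0 a1 n f x - f x))
        (fun x => (1 - 2 * x) * (2 * l1 + 3 * l0) * f' x
          + x * (1 - x) * (2 * l0 + l1) * f'' x) atTop (Set.Icc 0 1)) := by
  constructor
  · intro x hx hd
    have := DMV.core a0 a1 l0 l1 hl0 hl1 hA f f' f'' hf hf' {x} (by simpa using hx)
      (max |f' x| |f'' x|) (by simp) (by positivity) ?_
    · rwa [tendstoUniformlyOn_singleton_iff_tendsto] at this
    · intro ε hε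
      rw [hasDerivWithinAt_iff_isLittleO] at hd
      have h1 := hd.def hε
      rw [Filter.Eventually, Metric.mem_nhdsWithin_iff] at h1
      obtain ⟨δ, hδ, h2⟩ := h1
      refine ⟨δ, hδ, ?_⟩
      intro z hz y hy hyz
      rw [Set.mem_singleton_iff] at hz
      subst hz
      have h3 := h2 ⟨by rwa [Metric.mem_ball, Real.dist_eq], hy⟩
      simp only [Set.mem_ofPred_eq, Real.norm_eq_abs, smul_eq_mul] at h3
      rwa [mul_comm (f'' z)]
  · intro hd hc
    have hc' : ContinuousOn f' (Set.Icc 0 1) := fun x hx => (hd x hx).continuousWithinAt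
    obtain ⟨M1, hM1⟩ := isCompact_Icc.exists_bound_of_continuousOn hc'
    obtain ⟨M2, hM2⟩ := isCompact_Icc.exists_bound_of_continuousOn hc
    have hM10 : 0 ≤ M1 := (norm_nonneg _).trans (hM1 0 (by simp))
    refine DMV.core a0 a1 l0 l1 hl0 hl1 hA f f' f'' hf hf' (Set.Icc 0 1) subset_rfl
      (max M1 M2) (fun x hx => ⟨(hM1 x hx).trans (le_max_left _ _),
        (hM2 x hx).trans (le_max_right _ _)⟩) (hM10.trans (le_max_left _ _)) ?_
    intro ε hε
    have hu := isCompact_Icc.uniformContinuousOn_of_continuous hc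
    rw [Metric.uniformContinuousOn_iff] at hu
    obtain ⟨δ, hδ, h⟩ := hu ε hε
    refine ⟨δ, hδ, ?_⟩
    intro x hx y hy hyx
    have hsub : Set.uIcc x y ⊆ Set.Icc 0 1 := by
      intro z hz
      rw [Set.mem_uIcc] at hz
      rcases hz with hz | hz
      · exact ⟨hx.1.trans hz.1, hz.2.trans hy.2⟩
      · exact ⟨hy.1.trans hz.1, hz.2.trans hx.2⟩
    have hmv := Convex.norm_image_sub_le_of_norm_hasDerivWithin_le (𝕜 := ℝ)
      (f := fun z => f' z - f'' x * z)
      (f' := fun z => f'' z - f'' x) (s := Set.uIcc x y) (C := ε)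
      (x := x) (y := y) ?_ ?_ (convex_uIcc x y) Set.left_mem_uIcc Set.right_mem_uIcc
    · simp only [Real.norm_eq_abs] at hmv
      have e1 : f' y - f' x - f'' x * (y - x) = f' y - f'' x * y - (f' x - f'' x * x) := by ring
      rw [e1]; exact hmv
    · intro z hz
      have d0 := (hd z (hsub hz)).mono hsub
      have d1 : HasDerivWithinAt (fun z => f'' x * z) (f'' x * 1) (Set.uIcc x y) z :=
        (hasDerivWithinAt_id z _).const_mul _
      refine (d0.sub d1).congr_deriv ?_
      ring
    · intro z hz
      have hzx : |z - x| ≤ |y - x| := Set.abs_sub_left_of_mem_uIcc hz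
      have := h z (hsub hz) x hx (by rw [Real.dist_eq]; exact hzx.trans_lt hyx)
      rw [Real.dist_eq] at this
      exact this.le
end
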